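/- Let n ≥ 1 and 1 < k < 2. There is a constant C such that for all t ∈ ℝ and v ∈ 𝒮(ℝⁿ), ‖U(t)v; Σ^k‖ ≤ C(‖v; Σ^k‖ + |t|^k ‖ω^k v‖_{L²}) ≤ C(1+|t|)^k ‖v; Σ^k‖, where U(t) = exp(i(t/2)Δ) and ‖v;Σ^k‖ = ‖⟨ω⟩^k v‖₂ ∨ ‖⟨x⟩^k v‖₂. -/

import Mathlib

open MeasureTheory Complex
open scoped FourierTransform ENNReal

noncomputable section

abbrev Vn (n : ℕ) := EuclideanSpace ℝ (Fin n)

/-- `ω^ℓ = (−Δ)^{ℓ/2}` as the Fourier multiplier `|ξ|^ℓ`. -/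
def omMul (n : ℕ) (ℓ : ℝ) (f : Vn n → ℂ) : Vn n → ℂ :=
  𝓕⁻ (fun ξ => (((2 * Real.pi * ‖ξ‖) ^ ℓ : ℝ) : ℂ) * 𝓕 f ξ)

/-- `⟨ω⟩^k = (1−Δ)^{k/2}` as a Fourier multiplier. -/
def japMul (n : ℕ) (k : ℝ) (f : Vn n → ℂ) : Vn n → ℂ :=
  𝓕⁻ (fun ξ => (((1 + (2 * Real.pi * ‖ξ‖) ^ 2) ^ (k / 2) : ℝ) : ℂ) * 𝓕 f ξ)

/-- The free Schrödinger group `U(t) = exp(i(t/2)Δ)` as a Fourier multiplier. -/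
def Ufree (n : ℕ) (t : ℝ) (f : Vn n → ℂ) : Vn n → ℂ :=
  𝓕⁻ (fun ξ => Complex.exp (-2 * (Real.pi : ℂ) ^ 2 * Complex.I * (t : ℂ) * ((‖ξ‖ ^ 2 : ℝ) : ℂ))
      * 𝓕 f ξ)

/-- The `Σ^k` norm `‖⟨ω⟩^k v‖₂ ∨ ‖⟨x⟩^k v‖₂`. -/
def SigkNorm (n : ℕ) (k : ℝ) (f : Vn n → ℂ) : ℝ≥0∞ :=
  eLpNorm (japMul n k f) 2 volume ⊔
    eLpNorm (fun x : Vn n => (((1 + ‖x‖ ^ 2) ^ (k / 2) : ℝ) : ℂ) * f x) 2 volume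

open LineDeriv SchwartzMap

/-- L2 norm of a Schwartz function. -/
def nL {n : ℕ} (f : SchwartzMap (Vn n) ℂ) : ℝ := ‖f.toLp 2 volume‖

/-- multiplication -/
def mS {n : ℕ} (φ : Vn n → ℂ) (f : SchwartzMap (Vn n) ℂ) : SchwartzMap (Vn n) ℂ :=
  SchwartzMap.smulLeftCLM ℂ φ f

lemma mS_apply {n : ℕ} {φ : Vn n → ℂ} (hφ : φ.HasTemperateGrowth) (f : SchwartzMap (Vn n) ℂ)
    (x : Vn n) : mS φ f x = φ x * f x := by
  simp [mS, SchwartzMap.smulLeftCLM_apply_apply hφ]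

lemma nL_nonneg {n : ℕ} (f : SchwartzMap (Vn n) ℂ) : 0 ≤ nL f := norm_nonneg _

lemma toLp_add' {n : ℕ} (f g : SchwartzMap (Vn n) ℂ) :
    (f + g).toLp 2 volume = f.toLp 2 volume + g.toLp 2 volume :=
  (SchwartzMap.toLpCLM ℂ ℂ 2 volume).map_add f g

lemma toLp_sub' {n : ℕ} (f g : SchwartzMap (Vn n) ℂ) :
    (f - g).toLp 2 volume = f.toLp 2 volume - g.toLp 2 volume :=
  (SchwartzMap.toLpCLM ℂ ℂ 2 volume).map_sub f g

lemma toLp_smul' {n : ℕ} (c : ℂ) (f : SchwartzMap (Vn n) ℂ) :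
    (c • f).toLp 2 volume = c • f.toLp 2 volume :=
  (SchwartzMap.toLpCLM ℂ ℂ 2 volume).map_smul c f

lemma nL_add {n : ℕ} (f g : SchwartzMap (Vn n) ℂ) : nL (f + g) ≤ nL f + nL g := by
  rw [nL, toLp_add']; exact norm_add_le _ _

lemma nL_sub {n : ℕ} (f g : SchwartzMap (Vn n) ℂ) : nL (f - g) ≤ nL f + nL g := by
  rw [nL, toLp_sub']; exact norm_sub_le _ _

lemma nL_smul {n : ℕ} (c : ℂ) (f : SchwartzMap (Vn n) ℂ) : nL (c • f) = ‖c‖ * nL f := by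
  rw [nL, toLp_smul', norm_smul, nL]

lemma ip_eq {n : ℕ} (f g : SchwartzMap (Vn n) ℂ) :
    inner ℂ (f.toLp 2 volume) (g.toLp 2 volume) = ∫ x, starRingEnd ℂ (f x) * g x := by
  rw [SchwartzMap.inner_toL2_toL2_eq f g volume]
  congr 1; ext x
  simp [mul_comm]

lemma nL_sq {n : ℕ} (f : SchwartzMap (Vn n) ℂ) : nL f ^ 2 = ∫ x, ‖f x‖ ^ 2 := by
  have h := ip_eq f f
  have h2 := inner_self_eq_norm_sq_to_K (𝕜 := ℂ) (f.toLp 2 volume)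
  have h3 : (∫ x, starRingEnd ℂ (f x) * f x) = ((∫ x, ‖f x‖ ^ 2 : ℝ) : ℂ) := by
    rw [← integral_complex_ofReal]
    congr 1; ext x
    rw [mul_comm, Complex.mul_conj, Complex.normSq_eq_norm_sq]
  rw [h, h3] at h2
  have h4 : ((∫ x, ‖f x‖ ^ 2 : ℝ) : ℂ) = ((nL f ^ 2 : ℝ) : ℂ) := by
    rw [h2]; simp [nL]
  exact (Complex.ofReal_injective h4).symm

lemma sq_integrable {n : ℕ} (f : SchwartzMap (Vn n) ℂ) : Integrable (fun x => ‖f x‖ ^ 2) :=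
  (memLp_two_iff_integrable_sq_norm (f.memLp 2).1).1 (f.memLp 2)

lemma nL_mono {n : ℕ} {f g : SchwartzMap (Vn n) ℂ} (h : ∀ x, ‖f x‖ ≤ ‖g x‖) : nL f ≤ nL g := by
  refine (sq_le_sq₀ (nL_nonneg f) (nL_nonneg g)).1 ?_
  rw [nL_sq, nL_sq]
  refine integral_mono (sq_integrable f) (sq_integrable g) fun x => ?_
  have := h x
  dsimp only
  gcongr

lemma nL_fourier {n : ℕ} (f : SchwartzMap (Vn n) ℂ) : nL (𝓕 f) = nL f :=
  SchwartzMap.norm_fourier_toL2_eq f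

lemma nL_fourierInv {n : ℕ} (f : SchwartzMap (Vn n) ℂ) : nL (𝓕⁻ f) = nL f := by
  rw [← nL_fourier (𝓕⁻ f), FourierTransform.fourier_fourierInv_eq]

/-- complex gaussian -/
def gau {n : ℕ} (z : ℂ) (x : Vn n) : ℂ := Complex.exp (-z * ((‖x‖ ^ 2 : ℝ) : ℂ))

lemma iterD (z : ℂ) (m : ℕ) : iteratedDeriv m (fun s : ℝ => Complex.exp (-z * (s : ℂ)))
    = fun s : ℝ => (-z) ^ m * Complex.exp (-z * (s : ℂ)) := by
  induction m with
  | zero => simp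
  | succ m ih =>
    rw [iteratedDeriv_succ, ih]
    ext s
    have h1 : HasDerivAt (fun s : ℝ => -z * (s : ℂ)) (-z * 1) s :=
      (Complex.ofRealCLM.hasDerivAt (x := s)).const_mul (-z)
    have := (h1.cexp).const_mul ((-z) ^ m)
    rw [this.deriv]; ring

lemma gau_temp {n : ℕ} {z : ℂ} (hz : 0 ≤ z.re) : (gau z : Vn n → ℂ).HasTemperateGrowth := by
  have hc : ContDiff ℝ (⊤ : ℕ∞) (fun s : ℝ => Complex.exp (-z * (s : ℂ))) := by
    have : ContDiff ℝ (⊤ : ℕ∞) (fun s : ℝ => (s : ℂ)) := Complex.ofRealCLM.contDiff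
    fun_prop
  have := Function.HasTemperateGrowth.comp' (g := fun s : ℝ => Complex.exp (-z * (s : ℂ)))
    (f := fun x : Vn n => ‖x‖ ^ 2) (t := Set.Ici 0) (by rintro _ ⟨x, rfl⟩; simp) (uniqueDiffOn_Ici 0)
    hc.contDiffOn ?_ (by fun_prop)
  · exact this
  · intro N
    refine ⟨0, (1 + ‖z‖) ^ N, by positivity, fun m hm s hs => ?_⟩
    rw [iteratedFDerivWithin_eq_iteratedFDeriv (uniqueDiffOn_Ici 0)
      ((hc.of_le (by exact_mod_cast le_top)).contDiffAt) hs,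
      norm_iteratedFDeriv_eq_norm_iteratedDeriv, iterD]
    simp only [norm_mul, norm_pow, norm_neg, Complex.norm_exp, pow_zero, mul_one]
    have h1 : Real.exp (-z * (s : ℂ)).re ≤ 1 := by
      simp
      exact mul_nonneg hz hs
    calc ‖z‖ ^ m * Real.exp (-z * (s : ℂ)).re ≤ (1 + ‖z‖) ^ m * 1 := by gcongr; simp
      _ ≤ (1 + ‖z‖) ^ N := by
        rw [mul_one]; gcongr; simp

/-- coordinate along e -/
def co {n : ℕ} (e x : Vn n) : ℂ := ((inner ℝ x e : ℝ) : ℂ)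

lemma co_temp {n : ℕ} (e : Vn n) : (co e).HasTemperateGrowth := by
  unfold co
  have h1 : (fun x : Vn n => (inner ℝ x e : ℝ)).HasTemperateGrowth :=
    Function.hasTemperateGrowth_inner_left e
  exact Function.Complex.hasTemperateGrowth_ofReal.comp h1

lemma D_mS {n : ℕ} (e : Vn n) {φ φ' : Vn n → ℂ} (hφ : φ.HasTemperateGrowth)
    (hφ' : φ'.HasTemperateGrowth) (h : ∀ x, HasLineDerivAt ℝ φ (φ' x) x e)
    (f : SchwartzMap (Vn n) ℂ) :
    (∂_{e} (mS φ f) : SchwartzMap (Vn n) ℂ) = mS φ (∂_{e} f) + mS φ' f := by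
  ext x
  have hf : HasLineDerivAt ℝ f ((∂_{e} f : SchwartzMap (Vn n) ℂ) x) x e := by
    rw [SchwartzMap.lineDerivOp_apply]
    exact (f.differentiableAt.lineDifferentiableAt).hasLineDerivAt
  have h2 : HasLineDerivAt ℝ (mS φ f) (φ' x * f x + φ x * (∂_{e} f : SchwartzMap (Vn n) ℂ) x) x e := by
    have := HasDerivAt.mul (h x) hf
    simp only [zero_smul, add_zero] at this
    unfold HasLineDerivAt
    simp only [mS_apply hφ]
    exact this
  rw [SchwartzMap.lineDerivOp_apply, h2.lineDeriv, _root_.add_apply, mS_apply hφ, mS_apply hφ']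
  ring

lemma co_deriv {n : ℕ} {e : Vn n} (he : ‖e‖ = 1) (x : Vn n) :
    HasLineDerivAt ℝ (co e) 1 x e := by
  unfold HasLineDerivAt co
  have : HasDerivAt (fun t : ℝ => ((inner ℝ x e : ℝ) : ℂ) + (t : ℂ)) 1 0 :=
    (Complex.ofRealCLM.hasDerivAt (x := 0)).const_add _
  refine this.congr_of_eventuallyEq (Filter.Eventually.of_forall fun t => ?_)
  simp [inner_add_left, inner_smul_left, he]

lemma gau_deriv {n : ℕ} (z : ℂ) {e : Vn n} (he : ‖e‖ = 1) (x : Vn n) :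
    HasLineDerivAt ℝ (gau z) (-2 * z * (co e x * gau z x)) x e := by
  unfold HasLineDerivAt gau
  have hid := (Complex.ofRealCLM.hasDerivAt (x := 0))
  have h1 : HasDerivAt (fun t : ℝ => -z * (((‖x‖ ^ 2 : ℝ) : ℂ) + 2 * (co e x * (t : ℂ)) + (t : ℂ) * (t : ℂ)))
     (-z * (2 * (co e x * 1) + (1 * ((0 : ℝ) : ℂ) + ((0 : ℝ) : ℂ) * 1))) 0 :=
    ((((hid.const_mul (co e x)).const_mul 2).const_add _).add (hid.mul hid)).const_mul (-z)
  have h2 := h1.cexp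
  have h3 : (fun t : ℝ => Complex.exp (-z * ((‖x + t • e‖ ^ 2 : ℝ) : ℂ))) = fun t : ℝ =>
      Complex.exp (-z * (((‖x‖ ^ 2 : ℝ) : ℂ) + 2 * (co e x * (t : ℂ)) + (t : ℂ) * (t : ℂ))) := by
    ext t
    have : ‖x + t • e‖ ^ 2 = ‖x‖ ^ 2 + 2 * (inner ℝ x e * t) + t * t := by
      rw [norm_add_sq_real, norm_smul, inner_smul_right, he, Real.norm_eq_abs, mul_one, sq_abs]
      ring
    rw [this]
    simp [co]
  rw [h3]
  refine h2.congr_deriv ?_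
  simp
  ring

lemma inner_D {n : ℕ} (e : Vn n) (f g : SchwartzMap (Vn n) ℂ) :
    inner ℂ ((∂_{e} f : SchwartzMap (Vn n) ℂ).toLp 2 volume) (g.toLp 2 volume)
      = - inner ℂ (f.toLp 2 volume) ((∂_{e} g : SchwartzMap (Vn n) ℂ).toLp 2 volume) := by
  rw [ip_eq, ip_eq]
  have h := SchwartzMap.integral_bilinear_lineDerivOp_right_eq_neg_left (μ := volume) f g
    ((ContinuousLinearMap.mul ℝ ℂ).comp (Complex.conjCLE : ℂ →L[ℝ] ℂ)) e
  simp at h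
  rw [h, neg_neg]

lemma inner_mS {n : ℕ} {φ : Vn n → ℂ} (hφ : φ.HasTemperateGrowth) (hr : ∀ x, starRingEnd ℂ (φ x) = φ x)
    (f g : SchwartzMap (Vn n) ℂ) :
    inner ℂ ((mS φ f).toLp 2 volume) (g.toLp 2 volume)
      = inner ℂ (f.toLp 2 volume) ((mS φ g).toLp 2 volume) := by
  rw [ip_eq, ip_eq]
  congr 1; ext x
  simp [mS_apply hφ, hr]
  ring

lemma DX {n : ℕ} {e : Vn n} (he : ‖e‖ = 1) (f : SchwartzMap (Vn n) ℂ) :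
    (∂_{e} (mS (co e) f) : SchwartzMap (Vn n) ℂ) = mS (co e) (∂_{e} f) + f := by
  rw [D_mS e (co_temp e) (Function.HasTemperateGrowth.const 1) (fun x => co_deriv he x)]
  congr 1
  ext x
  rw [mS_apply (Function.HasTemperateGrowth.const 1)]; simp

lemma DG {n : ℕ} {e : Vn n} (he : ‖e‖ = 1) {z : ℂ} (hz : 0 ≤ z.re) (f : SchwartzMap (Vn n) ℂ) :
    (∂_{e} (mS (gau z) f) : SchwartzMap (Vn n) ℂ)
      = mS (gau z) (∂_{e} f) + (-2 * z) • mS (co e) (mS (gau z) f) := by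
  have ht : (fun x : Vn n => -2 * z * (co e x * gau z x)).HasTemperateGrowth :=
    (Function.HasTemperateGrowth.const (-2 * z)).mul ((co_temp e).mul (gau_temp hz))
  rw [D_mS e (gau_temp hz) ht (fun x => gau_deriv z he x)]
  congr 1
  ext x
  rw [mS_apply ht, _root_.smul_apply, mS_apply (co_temp e), mS_apply (gau_temp hz)]
  simp; ring

lemma co_real {n : ℕ} (e x : Vn n) : starRingEnd ℂ (co e x) = co e x := by simp [co]

lemma gau_real {n : ℕ} (a : ℝ) (x : Vn n) : gau (a : ℂ) x = ((Real.exp (-a * ‖x‖ ^ 2) : ℝ) : ℂ) := by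
  simp [gau]

lemma gau_conj {n : ℕ} (a : ℝ) (x : Vn n) : starRingEnd ℂ (gau (a : ℂ) x) = gau (a : ℂ) x := by
  rw [gau_real]; exact Complex.conj_ofReal _

lemma norm_gau {n : ℕ} (z : ℂ) (x : Vn n) : ‖gau z x‖ = Real.exp (-z.re * ‖x‖ ^ 2) := by
  rw [gau, Complex.norm_exp]
  congr 1
  rw [Complex.re_mul_ofReal]; simp

lemma norm_gau_le {n : ℕ} {z : ℂ} (hz : 0 ≤ z.re) (x : Vn n) : ‖gau z x‖ ≤ 1 := by
  rw [norm_gau, Real.exp_le_one_iff]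
  have : 0 ≤ z.re * ‖x‖ ^ 2 := by positivity
  linarith

lemma nL_gau_le {n : ℕ} {z : ℂ} (hz : 0 ≤ z.re) (f : SchwartzMap (Vn n) ℂ) :
    nL (mS (gau z) f) ≤ nL f := by
  refine nL_mono fun x => ?_
  rw [mS_apply (gau_temp hz), norm_mul]
  exact mul_le_of_le_one_left (norm_nonneg _) (norm_gau_le hz x)

lemma ip_le {n : ℕ} (f g : SchwartzMap (Vn n) ℂ) :
    ‖inner ℂ (f.toLp 2 volume) (g.toLp 2 volume)‖ ≤ nL f * nL g := norm_inner_le_norm _ _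

lemma nL_sq_ip {n : ℕ} (f : SchwartzMap (Vn n) ℂ) :
    nL f ^ 2 = ‖inner ℂ (f.toLp 2 volume) (f.toLp 2 volume)‖ := by
  rw [inner_self_eq_norm_sq_to_K (𝕜 := ℂ)]
  simp [nL]

lemma cross {n : ℕ} {e : Vn n} (he : ‖e‖ = 1) {a : ℝ} (ha : 0 ≤ a) (u : SchwartzMap (Vn n) ℂ) :
    nL (mS (gau (a : ℂ)) (mS (co e) (∂_{e} u))) ^ 2 ≤
      nL (mS (gau (a : ℂ)) (mS (co e) (mS (co e) u))) * nL (∂_{e} (∂_{e} u) : SchwartzMap (Vn n) ℂ)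
      + 2 * nL u * nL (mS (gau (a : ℂ)) (mS (co e) (∂_{e} u)))
      + 4 * a * nL (mS (gau (a : ℂ)) (mS (co e) (mS (co e) u)))
        * nL (mS (gau (a : ℂ)) (mS (co e) (∂_{e} u))) := by
  have hz : 0 ≤ ((a : ℂ)).re := by simpa using ha
  have hg := gau_temp (n := n) hz
  have hc := co_temp e
  have hgc := gau_conj (n := n) a
  have hcc := co_real e
  set ρ : Vn n → ℂ := gau (a : ℂ) with hρ
  set p := mS ρ (mS (co e) (∂_{e} u)) with hp
  set b := mS ρ (mS (co e) (mS (co e) u)) with hb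
  set d : SchwartzMap (Vn n) ℂ := ∂_{e} (∂_{e} u) with hd
  have key : (∂_{e} (mS (co e) (mS ρ p)) : SchwartzMap (Vn n) ℂ)
      = mS (co e) (mS (co e) (mS ρ (mS ρ d)))
        + ((2 : ℂ) • mS ρ p + (-(4 * a : ℂ)) • mS (co e) (mS (co e) (mS ρ p))) := by
    rw [hp, DX he, DG he hz, DG he hz, DX he]
    ext x
    simp only [_root_.add_apply, _root_.smul_apply, mS_apply hc, mS_apply hg, ← hρ, smul_eq_mul]
    ring
  have e1 : inner ℂ (p.toLp 2 volume) (p.toLp 2 volume) =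
      -(inner ℂ (b.toLp 2 volume) ((mS ρ d).toLp 2 volume)
        + (2 * inner ℂ ((mS ρ u).toLp 2 volume) (p.toLp 2 volume)
        + (-(4 * a : ℂ)) * inner ℂ (b.toLp 2 volume) (p.toLp 2 volume))) := by
    nth_rw 1 [hp]
    rw [inner_mS hg hgc, inner_mS hc hcc, inner_D, key, toLp_add', toLp_add', toLp_smul', toLp_smul',
      inner_add_right, inner_add_right, inner_smul_right, inner_smul_right,
      inner_mS hg hgc u, hb, inner_mS hg hgc, inner_mS hc hcc, inner_mS hc hcc,
      inner_mS hg hgc, inner_mS hc hcc, inner_mS hc hcc]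
  rw [nL_sq_ip, e1, norm_neg]
  refine (norm_add_le _ _).trans ?_
  rw [add_assoc]
  refine add_le_add ?_ ((norm_add_le _ _).trans (add_le_add ?_ ?_))
  · refine (ip_le _ _).trans ?_
    exact mul_le_mul_of_nonneg_left (nL_gau_le hz _) (nL_nonneg _)
  · rw [norm_mul, mul_assoc]
    simp only [Complex.norm_ofNat]
    refine mul_le_mul_of_nonneg_left ((ip_le _ _).trans ?_) (by norm_num)
    exact mul_le_mul_of_nonneg_right (nL_gau_le hz _) (nL_nonneg _)
  · rw [norm_mul, mul_assoc (4 * a)]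
    have : ‖(-(4 * a : ℂ))‖ = 4 * a := by simp [abs_of_nonneg ha]
    rw [this]
    exact mul_le_mul_of_nonneg_left (ip_le _ _) (by positivity)

lemma DDG {n : ℕ} {e : Vn n} (he : ‖e‖ = 1) {z : ℂ} (hz : 0 ≤ z.re) (u : SchwartzMap (Vn n) ℂ) :
    nL (∂_{e} (∂_{e} (mS (gau z) u)) : SchwartzMap (Vn n) ℂ) ≤
      50 * (nL (∂_{e} (∂_{e} u) : SchwartzMap (Vn n) ℂ)
      + ‖z‖ ^ 2 * nL (mS (gau (z.re : ℂ)) (mS (co e) (mS (co e) u))) + ‖z‖ * nL u) := by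
  have hz' : 0 ≤ ((z.re : ℂ)).re := by simpa using hz
  have hg := gau_temp (n := n) hz
  have hg' := gau_temp (n := n) hz'
  have hc := co_temp e
  have hX := cross he hz u
  have hza : z.re ≤ ‖z‖ := Complex.re_le_norm z
  have e1 : (∂_{e} (∂_{e} (mS (gau z) u)) : SchwartzMap (Vn n) ℂ)
      = mS (gau z) (∂_{e} (∂_{e} u)) + (-4 * z) • mS (gau z) (mS (co e) (∂_{e} u))
        + (4 * z ^ 2) • mS (gau z) (mS (co e) (mS (co e) u)) + (-2 * z) • mS (gau z) u := by
    rw [DG he hz, lineDerivOp_add, lineDerivOp_smul, DG he hz, DX he, DG he hz]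
    ext x
    simp only [_root_.add_apply, _root_.smul_apply, mS_apply hc, mS_apply hg, smul_eq_mul]
    ring
  have same : ∀ f : SchwartzMap (Vn n) ℂ, nL (mS (gau z) f) ≤ nL (mS (gau (z.re : ℂ)) f) := by
    intro f
    refine nL_mono fun x => ?_
    rw [mS_apply hg, mS_apply hg', norm_mul, norm_mul, norm_gau, norm_gau]
    simp
  set A := nL (∂_{e} (∂_{e} u) : SchwartzMap (Vn n) ℂ)
  set B := nL (mS (gau (z.re : ℂ)) (mS (co e) (mS (co e) u)))
  set X := nL (mS (gau (z.re : ℂ)) (mS (co e) (∂_{e} u)))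
  have hA : 0 ≤ A := nL_nonneg _
  have hB : 0 ≤ B := nL_nonneg _
  have hXn : 0 ≤ X := nL_nonneg _
  have hE : 0 ≤ nL u := nL_nonneg _
  have h1 : nL (∂_{e} (∂_{e} (mS (gau z) u)) : SchwartzMap (Vn n) ℂ) ≤
      A + 4 * ‖z‖ * X + 4 * ‖z‖ ^ 2 * B + 2 * ‖z‖ * nL u := by
    rw [e1]
    refine (nL_add _ _).trans (add_le_add ((nL_add _ _).trans (add_le_add ((nL_add _ _).trans (add_le_add ?_ ?_)) ?_)) ?_)
    · exact nL_gau_le hz _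
    · rw [nL_smul]; simp only [norm_mul, norm_neg, Complex.norm_ofNat]; gcongr; exact same _
    · rw [nL_smul]; simp only [norm_mul, norm_pow, Complex.norm_ofNat]; gcongr; exact same _
    · rw [nL_smul]; simp only [norm_mul, norm_neg, Complex.norm_ofNat]; gcongr; exact nL_gau_le hz _
  set r := ‖z‖
  have hr : 0 ≤ r := norm_nonneg _
  have h2 : r * X ≤ 8 * (A + r ^ 2 * B + r * nL u) := by
    by_contra hcon
    push Not at hcon
    have hX2 : X ^ 2 ≤ B * A + 2 * nL u * X + 4 * r * B * X := by
      refine hX.trans ?_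
      gcongr
    have h3 : (r * X) ^ 2 ≤ (r ^ 2 * B) * A + 2 * (r * nL u) * (r * X) + 4 * (r ^ 2 * B) * (r * X) := by
      nlinarith [mul_le_mul_of_nonneg_left hX2 (sq_nonneg r)]
    have b1 : 0 ≤ r ^ 2 * B := by positivity
    have b2 : 0 ≤ r * nL u := by positivity
    have b3 : 0 ≤ r * X := by positivity
    generalize r ^ 2 * B = b at *
    generalize r * nL u = E at *
    generalize r * X = Y at *
    nlinarith [mul_nonneg b1 hA, mul_nonneg b2 hA, mul_nonneg b1 b2, mul_nonneg b3 hA, mul_nonneg b3 b1, mul_nonneg b3 b2, mul_le_mul_of_nonneg_left hcon.le b3]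
  nlinarith [mul_nonneg (sq_nonneg r) hB, mul_nonneg hr hE]

/-- truncated weighted mass -/
def WW {n : ℕ} (c R : ℝ) (f : SchwartzMap (Vn n) ℂ) : ℝ :=
  ∫ x, min 1 ((c * ‖x‖) ^ 4 / R ^ 4) * ‖f x‖ ^ 2

lemma WW_int {n : ℕ} (c R : ℝ) (f : SchwartzMap (Vn n) ℂ) :
    Integrable (fun x => min 1 ((c * ‖x‖) ^ 4 / R ^ 4) * ‖f x‖ ^ 2) := by
  refine (sq_integrable f).mono' ?_ (Filter.Eventually.of_forall fun x => ?_)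
  · have := f.continuous
    exact Continuous.aestronglyMeasurable (by fun_prop)
  · have h0 : 0 ≤ min 1 ((c * ‖x‖) ^ 4 / R ^ 4) := le_min (by norm_num) (by positivity)
    rw [Real.norm_of_nonneg (by positivity)]
    exact mul_le_of_le_one_left (by positivity) (min_le_left _ _)

lemma WW_nonneg {n : ℕ} (c R : ℝ) (f : SchwartzMap (Vn n) ℂ) : 0 ≤ WW c R f :=
  integral_nonneg fun x => mul_nonneg (le_min (by norm_num) (by positivity)) (by positivity)

lemma WW_le {n : ℕ} (c R : ℝ) (f : SchwartzMap (Vn n) ℂ) : WW c R f ≤ nL f ^ 2 := by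
  rw [nL_sq]
  exact integral_mono (WW_int c R f) (sq_integrable f) fun x =>
    mul_le_of_le_one_left (by positivity) (min_le_left _ _)

lemma sqW_le {n : ℕ} (c R : ℝ) (f : SchwartzMap (Vn n) ℂ) : √(WW c R f) ≤ nL f :=
  Real.sqrt_le_iff.2 ⟨nL_nonneg f, WW_le c R f⟩

lemma nL_le_sqW {n : ℕ} {c R : ℝ} {f h : SchwartzMap (Vn n) ℂ}
    (h1 : ∀ x, ‖f x‖ ≤ ‖h x‖) (h2 : ∀ x, ‖f x‖ ≤ (c ^ 2 / R ^ 2 * ‖x‖ ^ 2) * ‖h x‖) :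
    nL f ≤ √(WW c R h) := by
  refine Real.le_sqrt_of_sq_le ?_
  rw [nL_sq]
  refine integral_mono (sq_integrable f) (WW_int c R h) fun x => ?_
  dsimp only
  rw [min_mul_of_nonneg _ _ (by positivity)]
  refine le_min ?_ ?_
  · rw [one_mul]; have := h1 x; gcongr
  · calc ‖f x‖ ^ 2 ≤ ((c ^ 2 / R ^ 2 * ‖x‖ ^ 2) * ‖h x‖) ^ 2 := by have := h2 x; gcongr
      _ = _ := by ring

lemma gauW1 {n : ℕ} (c R : ℝ) (h : SchwartzMap (Vn n) ℂ) :
    nL (h - mS (gau ((c ^ 2 / R ^ 2 : ℝ) : ℂ)) h) ≤ √(WW c R h) := by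
  have hz : 0 ≤ (((c ^ 2 / R ^ 2 : ℝ) : ℂ)).re := by rw [Complex.ofReal_re]; positivity
  have hx : ∀ x, ‖(h - mS (gau ((c ^ 2 / R ^ 2 : ℝ) : ℂ)) h) x‖
      = (1 - Real.exp (-(c ^ 2 / R ^ 2) * ‖x‖ ^ 2)) * ‖h x‖ := by
    intro x
    rw [_root_.sub_apply, mS_apply (gau_temp hz), gau_real, ← one_sub_mul, norm_mul]
    congr 1
    rw [← Complex.ofReal_one, ← Complex.ofReal_sub, Complex.norm_real, Real.norm_of_nonneg]
    have : Real.exp (-(c ^ 2 / R ^ 2) * ‖x‖ ^ 2) ≤ 1 := by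
      rw [Real.exp_le_one_iff]
      have : 0 ≤ (c ^ 2 / R ^ 2) * ‖x‖ ^ 2 := by positivity
      linarith
    linarith
  refine nL_le_sqW (fun x => ?_) (fun x => ?_)
  · rw [hx]
    exact mul_le_of_le_one_left (norm_nonneg _) (by linarith [Real.exp_pos (-(c ^ 2 / R ^ 2) * ‖x‖ ^ 2)])
  · rw [hx]
    refine mul_le_mul_of_nonneg_right ?_ (norm_nonneg _)
    have := Real.add_one_le_exp (-(c ^ 2 / R ^ 2) * ‖x‖ ^ 2)
    linarith

lemma norm_co_le {n : ℕ} {e : Vn n} (he : ‖e‖ = 1) (x : Vn n) : ‖co e x‖ ≤ ‖x‖ := by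
  rw [co, Complex.norm_real]
  simpa [he] using norm_inner_le_norm (𝕜 := ℝ) x e

lemma gauW2 {n : ℕ} (c R : ℝ) {e : Vn n} (he : ‖e‖ = 1) (h : SchwartzMap (Vn n) ℂ) :
    c ^ 2 / R ^ 2 * nL (mS (gau ((c ^ 2 / R ^ 2 : ℝ) : ℂ)) (mS (co e) (mS (co e) h))) ≤ √(WW c R h) := by
  have hz : 0 ≤ (((c ^ 2 / R ^ 2 : ℝ) : ℂ)).re := by rw [Complex.ofReal_re]; positivity
  have h0 : 0 ≤ c ^ 2 / R ^ 2 := by positivity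
  have e1 : c ^ 2 / R ^ 2 * nL (mS (gau ((c ^ 2 / R ^ 2 : ℝ) : ℂ)) (mS (co e) (mS (co e) h)))
    = nL (((c ^ 2 / R ^ 2 : ℝ) : ℂ) • mS (gau ((c ^ 2 / R ^ 2 : ℝ) : ℂ)) (mS (co e) (mS (co e) h))) := by
    rw [nL_smul, Complex.norm_real, Real.norm_of_nonneg h0]
  rw [e1]
  have hx : ∀ x, ‖(((c ^ 2 / R ^ 2 : ℝ) : ℂ) • mS (gau ((c ^ 2 / R ^ 2 : ℝ) : ℂ)) (mS (co e) (mS (co e) h))) x‖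
      ≤ ((c ^ 2 / R ^ 2 * ‖x‖ ^ 2) * Real.exp (-(c ^ 2 / R ^ 2 * ‖x‖ ^ 2))) * ‖h x‖ := by
    intro x
    rw [_root_.smul_apply, mS_apply (gau_temp hz), mS_apply (co_temp e), mS_apply (co_temp e), smul_eq_mul,
      norm_mul, norm_mul, norm_mul, norm_mul, Complex.norm_real, Real.norm_of_nonneg h0, norm_gau,
      Complex.ofReal_re, neg_mul]
    have := norm_co_le he x
    have h3 : ‖co e x‖ * ‖co e x‖ ≤ ‖x‖ ^ 2 := by rw [sq]; gcongr
    calc _ = (c ^ 2 / R ^ 2 * Real.exp (-(c ^ 2 / R ^ 2 * ‖x‖ ^ 2))) * (‖co e x‖ * ‖co e x‖) * ‖h x‖ := by ring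
      _ ≤ (c ^ 2 / R ^ 2 * Real.exp (-(c ^ 2 / R ^ 2 * ‖x‖ ^ 2))) * ‖x‖ ^ 2 * ‖h x‖ := by gcongr
      _ = _ := by ring
  refine nL_le_sqW (fun x => (hx x).trans ?_) (fun x => (hx x).trans ?_)
  · refine mul_le_of_le_one_left (norm_nonneg _) ?_
    set y := c ^ 2 / R ^ 2 * ‖x‖ ^ 2
    have := Real.add_one_le_exp y
    rw [Real.exp_neg, ← div_eq_mul_inv, div_le_one (Real.exp_pos y)]
    linarith
  · refine mul_le_mul_of_nonneg_right ?_ (norm_nonneg _)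
    refine mul_le_of_le_one_right (by positivity) ?_
    rw [Real.exp_le_one_iff]
    have : 0 ≤ c ^ 2 / R ^ 2 * ‖x‖ ^ 2 := by positivity
    linarith

lemma smul_co {n : ℕ} (e : Vn n) (f : SchwartzMap (Vn n) ℂ) :
    SchwartzMap.smulLeftCLM ℂ (inner ℝ · e) f = mS (co e) f := by
  ext x
  rw [mS_apply (co_temp e), SchwartzMap.smulLeftCLM_apply_apply (Function.hasTemperateGrowth_inner_left e)]
  simp [co]

lemma norm_2piI : ‖-(2 * (Real.pi : ℂ) * Complex.I)‖ = 2 * Real.pi := by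
  simp [abs_of_pos Real.pi_pos]

lemma nL_D_fourier {n : ℕ} (e : Vn n) (f : SchwartzMap (Vn n) ℂ) :
    nL (∂_{e} (∂_{e} (𝓕 f)) : SchwartzMap (Vn n) ℂ) = (2 * Real.pi) ^ 2 * nL (mS (co e) (mS (co e) f)) := by
  rw [SchwartzMap.lineDerivOp_fourier_eq, SchwartzMap.lineDerivOp_fourier_eq, smul_co, smul_co,
    nL_fourier, nL_smul, norm_2piI]
  have : mS (co e) (-(2 * (Real.pi : ℂ) * Complex.I) • mS (co e) f)
      = -(2 * (Real.pi : ℂ) * Complex.I) • mS (co e) (mS (co e) f) := by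
    ext x
    simp only [_root_.smul_apply, mS_apply (co_temp e), smul_eq_mul]; ring
  rw [this, nL_smul, norm_2piI]; ring

lemma nL_D_fourierInv {n : ℕ} (e : Vn n) (f : SchwartzMap (Vn n) ℂ) :
    nL (∂_{e} (∂_{e} f) : SchwartzMap (Vn n) ℂ) = (2 * Real.pi) ^ 2 * nL (mS (co e) (mS (co e) (𝓕⁻ f))) := by
  rw [← nL_D_fourier, FourierTransform.fourier_fourierInv_eq]

lemma nL_sum {n : ℕ} {ι : Type*} (s : Finset ι) (f : ι → SchwartzMap (Vn n) ℂ) :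
    nL (∑ i ∈ s, f i) ≤ ∑ i ∈ s, nL (f i) := by
  classical
  induction s using Finset.induction_on with
  | empty => simp [nL]; exact (SchwartzMap.toLpCLM ℂ ℂ 2 volume).map_zero
  | insert a s ha ih =>
    rw [Finset.sum_insert ha, Finset.sum_insert ha]
    exact (nL_add _ _).trans (by gcongr)

lemma WW_split {n : ℕ} {R : ℝ} (hR : 0 < R) {K : ℝ} (w0 w1 : SchwartzMap (Vn n) ℂ)
    (hK : ∀ e : Vn n, ‖e‖ = 1 → nL (mS (co e) (mS (co e) w1)) ≤ R ^ 2 * K) :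
    WW 1 R (w0 + w1) ≤ 2 * nL w0 ^ 2 + 2 * (n * K) ^ 2 := by
  let e : Fin n → Vn n := fun j => EuclideanSpace.single j 1
  have he : ∀ j, ‖e j‖ = 1 := fun j => by simp [e]
  set s := ∑ j, mS (co (e j)) (mS (co (e j)) w1) with hs
  have hsx : ∀ x, s x = ((‖x‖ ^ 2 : ℝ) : ℂ) * w1 x := by
    intro x
    rw [hs, _root_.sum_apply]
    simp only [mS_apply (co_temp _), co, e]
    rw [EuclideanSpace.norm_sq_eq]
    push_cast
    rw [Finset.sum_mul]
    refine Finset.sum_congr rfl fun j _ => ?_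
    have hj : inner ℝ x (EuclideanSpace.single j (1 : ℝ)) = x j := by
      rw [EuclideanSpace.inner_single_right]; simp
    rw [hj, ← Complex.ofReal_pow, Real.norm_eq_abs, sq_abs, sq]
    push_cast
    ring
  have h1 : nL s ≤ R ^ 2 * (n * K) := by
    refine (nL_sum _ _).trans ((Finset.sum_le_sum fun j _ => hK (e j) (he j)).trans ?_)
    simp; apply le_of_eq; ring
  have h2 : nL s ^ 2 ≤ R ^ 4 * (n * K) ^ 2 := by
    have := nL_nonneg s
    calc nL s ^ 2 ≤ (R ^ 2 * (n * K)) ^ 2 := by gcongr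
      _ = _ := by ring
  have h3 : WW 1 R (w0 + w1) ≤ ∫ x, (2 * ‖w0 x‖ ^ 2 + 2 / R ^ 4 * ‖s x‖ ^ 2) := by
    refine integral_mono (WW_int _ _ _) (((sq_integrable w0).const_mul 2).add ((sq_integrable s).const_mul _)) fun x => ?_
    dsimp only
    have hadd : ‖(w0 + w1) x‖ ^ 2 ≤ 2 * ‖w0 x‖ ^ 2 + 2 * ‖w1 x‖ ^ 2 := by
      rw [_root_.add_apply]
      have := norm_add_le (w0 x) (w1 x)
      calc ‖w0 x + w1 x‖ ^ 2 ≤ (‖w0 x‖ + ‖w1 x‖) ^ 2 := by gcongr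
        _ ≤ _ := by nlinarith [sq_nonneg (‖w0 x‖ - ‖w1 x‖)]
    have hm0 : 0 ≤ min 1 ((1 * ‖x‖) ^ 4 / R ^ 4) := le_min (by norm_num) (by positivity)
    have hm1 : min 1 ((1 * ‖x‖) ^ 4 / R ^ 4) ≤ 1 := min_le_left _ _
    have hm2 : min 1 ((1 * ‖x‖) ^ 4 / R ^ 4) ≤ (1 * ‖x‖) ^ 4 / R ^ 4 := min_le_right _ _
    have hs2 : 2 / R ^ 4 * ‖s x‖ ^ 2 = (1 * ‖x‖) ^ 4 / R ^ 4 * (2 * ‖w1 x‖ ^ 2) := by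
      rw [hsx, norm_mul, Complex.norm_real, Real.norm_of_nonneg (by positivity)]; ring
    calc _ ≤ min 1 ((1 * ‖x‖) ^ 4 / R ^ 4) * (2 * ‖w0 x‖ ^ 2 + 2 * ‖w1 x‖ ^ 2) := by gcongr
      _ = min 1 ((1 * ‖x‖) ^ 4 / R ^ 4) * (2 * ‖w0 x‖ ^ 2) + min 1 ((1 * ‖x‖) ^ 4 / R ^ 4) * (2 * ‖w1 x‖ ^ 2) := by ring
      _ ≤ 1 * (2 * ‖w0 x‖ ^ 2) + (1 * ‖x‖) ^ 4 / R ^ 4 * (2 * ‖w1 x‖ ^ 2) := by gcongr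
      _ = _ := by rw [hs2, one_mul]
  rw [integral_add ((sq_integrable w0).const_mul 2) ((sq_integrable s).const_mul _), integral_const_mul,
    integral_const_mul, ← nL_sq, ← nL_sq] at h3
  refine h3.trans ?_
  have : 2 / R ^ 4 * nL s ^ 2 ≤ 2 / R ^ 4 * (R ^ 4 * (n * K) ^ 2) := by gcongr
  have h5 : 2 / R ^ 4 * (R ^ 4 * (n * K) ^ 2) = 2 * (n * K) ^ 2 := by field_simp
  linarith

lemma fInv_add {n : ℕ} (f g : SchwartzMap (Vn n) ℂ) : 𝓕⁻ (f + g) = 𝓕⁻ f + 𝓕⁻ g :=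
  FourierTransform.fourierInv_add f g

lemma f_sub {n : ℕ} (f g : SchwartzMap (Vn n) ℂ) : 𝓕 (f - g) = 𝓕 f - 𝓕 g :=
  (FourierTransform.fourierCLM ℂ (SchwartzMap (Vn n) ℂ)).map_sub f g

/-- The Schwartz version of the free evolution. -/
def US {n : ℕ} (t : ℝ) (v : SchwartzMap (Vn n) ℂ) : SchwartzMap (Vn n) ℂ :=
  𝓕⁻ (mS (gau (((2 * Real.pi ^ 2 * t : ℝ) : ℂ) * Complex.I)) (𝓕 v))

lemma re_zero (b : ℝ) : 0 ≤ ((b : ℂ) * Complex.I).re := by simp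

lemma re_zero' (b : ℝ) : ((b : ℂ) * Complex.I).re = 0 := by simp

lemma nL_US {n : ℕ} (t : ℝ) (v : SchwartzMap (Vn n) ℂ) : nL (US t v) = nL v := by
  rw [US, nL_fourierInv, ← nL_fourier v]
  refine le_antisymm (nL_gau_le (re_zero _) _) (nL_mono fun x => ?_)
  rw [mS_apply (gau_temp (re_zero _)), norm_mul, norm_gau, re_zero']
  simp

set_option maxHeartbeats 1000000 in
lemma perR {n : ℕ} {t R : ℝ} (hR : 0 < R) (htR : |t| ≤ R ^ 2) (v : SchwartzMap (Vn n) ℂ) :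
    WW 1 R (US t v) ≤ (6 + 6 * (n * 25000) ^ 2) *
      (WW 1 R v + WW |t| R (𝓕 v) + |t| ^ 2 / R ^ 4 * nL v ^ 2) := by
  set τ := |t| with hτ
  have hτ0 : 0 ≤ τ := abs_nonneg t
  set g := 𝓕 v with hg
  set χ : Vn n → ℂ := gau ((1 ^ 2 / R ^ 2 : ℝ) : ℂ) with hχ
  set a : ℝ := τ ^ 2 / R ^ 2 with ha
  have ha0 : 0 ≤ a := by positivity
  set ρ : Vn n → ℂ := gau (a : ℂ) with hρ
  set b : ℝ := 2 * Real.pi ^ 2 * t with hb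
  set z : ℂ := (a : ℂ) + (b : ℂ) * Complex.I with hz
  have hzre : z.re = a := by simp [hz]
  have hz0 : 0 ≤ z.re := by rw [hzre]; exact ha0
  have hχ0 : 0 ≤ (((1 ^ 2 / R ^ 2 : ℝ) : ℂ)).re := by rw [Complex.ofReal_re]; positivity
  have hρ0 : 0 ≤ ((a : ℂ)).re := by rw [Complex.ofReal_re]; positivity
  set u := mS χ v with hu
  set uh := 𝓕 u with huh
  set α := √(WW 1 R v) with hα
  set β := √(WW τ R g) with hβ
  set γ := τ / R ^ 2 * nL v with hγ
  have hα0 : 0 ≤ α := Real.sqrt_nonneg _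
  have hβ0 : 0 ≤ β := Real.sqrt_nonneg _
  have hγ0 : 0 ≤ γ := mul_nonneg (by positivity) (nL_nonneg _)
  have hd : nL (g - uh) ≤ α := by
    rw [hg, huh, ← f_sub, nL_fourier]
    exact gauW1 1 R v
  have hE := gau_temp (n := n) (re_zero b)
  have hρt : ρ.HasTemperateGrowth := gau_temp (n := n) hρ0
  have hzt := gau_temp (n := n) hz0
  have hχt : χ.HasTemperateGrowth := gau_temp (n := n) hχ0
  -- decomposition
  set w0 := 𝓕⁻ (mS (gau ((b : ℂ) * Complex.I)) (g - mS ρ uh)) with hw0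
  set w1 := 𝓕⁻ (mS (gau z) uh) with hw1
  have hw : US t v = w0 + w1 := by
    rw [hw0, hw1, ← fInv_add, US]
    congr 1
    ext x
    have : gau z x = gau ((b : ℂ) * Complex.I) x * ρ x := by
      rw [hρ, gau, gau, gau, ← Complex.exp_add]; congr 1; rw [hz]; ring
    rw [_root_.add_apply, mS_apply hE, mS_apply hE, mS_apply hzt, _root_.sub_apply, mS_apply hρt, this]
    ring
  have hw0n : nL w0 ≤ α + β := by
    rw [hw0, nL_fourierInv]
    refine (nL_gau_le (re_zero _) _).trans ?_
    have e1 : g - mS ρ uh = mS ρ (g - uh) + (g - mS ρ g) := by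
      ext x
      simp only [_root_.add_apply, _root_.sub_apply, mS_apply hρt]; ring
    rw [e1]
    refine (nL_add _ _).trans (add_le_add ((nL_gau_le hρ0 _).trans hd) ?_)
    exact gauW1 τ R g
  have hpi : Real.pi ^ 2 < 10 := by
    have := Real.pi_lt_d2; have := Real.pi_pos; nlinarith
  have hzn : ‖z‖ ≤ 21 * τ := by
    have h1 : ‖z‖ ≤ a + |b| := by
      refine (norm_add_le _ _).trans ?_
      simp [abs_of_nonneg ha0]
    have h2 : a ≤ τ := by
      rw [ha, div_le_iff₀ (by positivity)]; nlinarith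
    have h3 : |b| = 2 * Real.pi ^ 2 * τ := by
      rw [hb, abs_mul, abs_of_nonneg (by positivity)]
    nlinarith
  have hK : ∀ e : Vn n, ‖e‖ = 1 → nL (mS (co e) (mS (co e) w1)) ≤ R ^ 2 * (25000 * (α + β + γ)) := by
    intro e he
    have hct := co_temp e
    have h1 := nL_D_fourierInv e (mS (gau z) uh)
    have h2 := DDG he hz0 uh
    rw [hzre, ← hρ] at h2
    have h3 : nL (mS (co e) (mS (co e) w1)) ≤ nL (∂_{e} (∂_{e} (mS (gau z) uh)) : SchwartzMap (Vn n) ℂ) := by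
      rw [h1]
      refine le_mul_of_one_le_left (nL_nonneg _) ?_
      have := Real.pi_gt_three
      nlinarith
    have h4 : nL (∂_{e} (∂_{e} uh) : SchwartzMap (Vn n) ℂ) ≤ R ^ 2 * (40 * α) := by
      rw [huh, nL_D_fourier]
      have h5 : (1:ℝ) ^ 2 / R ^ 2 * nL (mS χ (mS (co e) (mS (co e) v))) ≤ α := gauW2 1 R he v
      have e1 : mS (co e) (mS (co e) u) = mS χ (mS (co e) (mS (co e) v)) := by
        ext x
        simp only [hu, mS_apply hct, mS_apply hχt]; ring
      rw [e1]
      rw [one_pow, one_div, inv_mul_le_iff₀ (by positivity)] at h5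
      have : (2 * Real.pi) ^ 2 ≤ 40 := by nlinarith
      calc _ ≤ 40 * (R ^ 2 * α) := mul_le_mul this h5 (nL_nonneg _) (by norm_num)
        _ = _ := by ring
    have h6 : ‖z‖ ^ 2 * nL (mS ρ (mS (co e) (mS (co e) uh))) ≤ R ^ 2 * (441 * (α + β)) := by
      have h7 := gauW2 τ R he g
      have h8 := (gauW2 τ R he (g - uh)).trans (sqW_le _ _ _)
      have e1 : mS ρ (mS (co e) (mS (co e) uh)) = mS ρ (mS (co e) (mS (co e) g))
          - mS ρ (mS (co e) (mS (co e) (g - uh))) := by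
        ext x
        simp only [_root_.sub_apply, mS_apply hct, mS_apply hρt]; ring
      have h9 : τ ^ 2 / R ^ 2 * nL (mS ρ (mS (co e) (mS (co e) uh))) ≤ α + β := by
        have : τ ^ 2 / R ^ 2 * nL (mS ρ (mS (co e) (mS (co e) uh))) ≤ τ ^ 2 / R ^ 2 *
          (nL (mS ρ (mS (co e) (mS (co e) g))) + nL (mS ρ (mS (co e) (mS (co e) (g - uh))))) := by
          rw [e1]
          exact mul_le_mul_of_nonneg_left (nL_sub _ _) (by positivity)
        rw [mul_add] at this
        linarith
      have h10 : ‖z‖ ^ 2 ≤ 441 * τ ^ 2 := by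
        calc ‖z‖ ^ 2 ≤ (21 * τ) ^ 2 := by gcongr
          _ = _ := by ring
      calc _ ≤ (441 * τ ^ 2) * nL (mS ρ (mS (co e) (mS (co e) uh))) :=
            mul_le_mul_of_nonneg_right h10 (nL_nonneg _)
        _ = R ^ 2 * (441 * (τ ^ 2 / R ^ 2 * nL (mS ρ (mS (co e) (mS (co e) uh))))) := by field_simp
        _ ≤ _ := by gcongr
    have h11 : ‖z‖ * nL uh ≤ R ^ 2 * (21 * γ) := by
      have : nL uh ≤ nL v := by rw [huh, nL_fourier]; exact nL_gau_le hχ0 _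
      calc _ ≤ (21 * τ) * nL v := mul_le_mul hzn this (nL_nonneg _) (by positivity)
        _ = _ := by rw [hγ]; field_simp
    have hR2 : 0 ≤ R ^ 2 := by positivity
    have : R ^ 2 * (25000 * (α + β + γ)) = 25000 * (R ^ 2 * α) + 25000 * (R ^ 2 * β) + 25000 * (R ^ 2 * γ) := by ring
    have k1 := mul_nonneg hR2 hα0
    have k2 := mul_nonneg hR2 hβ0
    have k3 := mul_nonneg hR2 hγ0
    rw [this]
    have h4' : nL (∂_{e} (∂_{e} uh) : SchwartzMap (Vn n) ℂ) ≤ 40 * (R ^ 2 * α) := by linarith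
    have h6' : ‖z‖ ^ 2 * nL (mS ρ (mS (co e) (mS (co e) uh))) ≤ 441 * (R ^ 2 * α) + 441 * (R ^ 2 * β) := by linarith
    have h11' : ‖z‖ * nL uh ≤ 21 * (R ^ 2 * γ) := by linarith
    clear_value uh ρ z w1
    linarith
  rw [hw]
  refine (WW_split hR w0 w1 hK).trans ?_
  have hα2 : WW 1 R v = α ^ 2 := (Real.sq_sqrt (WW_nonneg _ _ _)).symm
  have hβ2 : WW τ R g = β ^ 2 := (Real.sq_sqrt (WW_nonneg _ _ _)).symm
  have hγ2 : τ ^ 2 / R ^ 4 * nL v ^ 2 = γ ^ 2 := by rw [hγ]; ring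
  rw [hα2, hβ2, hγ2]
  have hS : (α + β + γ) ^ 2 ≤ 3 * (α ^ 2 + β ^ 2 + γ ^ 2) := by
    nlinarith [sq_nonneg (α - β), sq_nonneg (β - γ), sq_nonneg (α - γ)]
  have h12 : nL w0 ^ 2 ≤ (α + β + γ) ^ 2 := by
    have := nL_nonneg w0
    have : nL w0 ≤ α + β + γ := by linarith
    gcongr
  have h13 : (n * (25000 * (α + β + γ)) : ℝ) ^ 2 = (n * 25000) ^ 2 * (α + β + γ) ^ 2 := by ring
  rw [h13]
  have h14 : ((n : ℝ) * 25000) ^ 2 * (α + β + γ) ^ 2 ≤ (n * 25000) ^ 2 * (3 * (α ^ 2 + β ^ 2 + γ ^ 2)) := by gcongr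
  linarith

lemma perR' {n : ℕ} {t R : ℝ} (hR : 0 < R) (v : SchwartzMap (Vn n) ℂ) :
    WW 1 R (US t v) ≤ (6 + 6 * (n * 25000) ^ 2) *
      (WW 1 R v + WW |t| R (𝓕 v) + min 1 (√|t| ^ 4 / R ^ 4) * nL v ^ 2) := by
  have hs : √|t| ^ 4 = |t| ^ 2 := by
    rw [show (4 : ℕ) = 2 * 2 from rfl, pow_mul, Real.sq_sqrt (abs_nonneg t)]
  rw [hs]
  have h1 := WW_nonneg 1 R v
  have h2 := WW_nonneg |t| R (𝓕 v)
  have h3 := sq_nonneg (nL v)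
  by_cases h : |t| ≤ R ^ 2
  · rw [min_eq_right]
    · exact perR hR h v
    · rw [div_le_one (by positivity)]
      calc |t| ^ 2 ≤ (R ^ 2) ^ 2 := by gcongr
        _ = _ := by ring
  · rw [min_eq_left]
    · have h4 := WW_le 1 R (US t v)
      rw [nL_US] at h4
      have h5 : 0 ≤ 6 * ((n : ℝ) * 25000) ^ 2 := by positivity
      nlinarith [mul_nonneg h5 (add_nonneg (add_nonneg h1 h2) h3)]
    · rw [one_le_div (by positivity)]
      push Not at h
      calc R ^ 4 = (R ^ 2) ^ 2 := by ring
        _ ≤ _ := by gcongr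

/-- radial integral -/
def mkr (k s : ℝ) : ℝ≥0∞ :=
  ∫⁻ R in Set.Ioi (0 : ℝ), ENNReal.ofReal (R ^ (2 * k - 1) * min 1 (s ^ 4 / R ^ 4))

lemma mkr_aux {k s : ℝ} (hk : 1 < k) (hs : 0 < s) :
    ∫⁻ R in Set.Ioc 0 s, ENNReal.ofReal (R ^ (2 * k - 1)) = ENNReal.ofReal (s ^ (2 * k) / (2 * k)) := by
  have hi : IntegrableOn (fun R : ℝ => R ^ (2 * k - 1)) (Set.Ioc 0 s) :=
    (intervalIntegrable_iff_integrableOn_Ioc_of_le hs.le).1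
      (intervalIntegral.intervalIntegrable_rpow' (by linarith))
  rw [← ofReal_integral_eq_lintegral_ofReal hi, ← intervalIntegral.integral_of_le hs.le,
    integral_rpow (Or.inl (by linarith)), show 2 * k - 1 + 1 = 2 * k by ring,
    Real.zero_rpow (by linarith), sub_zero]
  refine (ae_restrict_iff' measurableSet_Ioc).2 (Filter.Eventually.of_forall fun R hR => ?_)
  exact Real.rpow_nonneg hR.1.le _

lemma mkr_lower {k s : ℝ} (hk : 1 < k) (hs : 0 ≤ s) :
    ENNReal.ofReal (s ^ (2 * k) / (2 * k)) ≤ mkr k s := by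
  rcases hs.eq_or_lt with rfl | hs
  · rw [Real.zero_rpow (by linarith)]; simp
  rw [← mkr_aux hk hs]
  refine le_trans (le_of_eq ?_) (lintegral_mono_set (s := Set.Ioc 0 s) Set.Ioc_subset_Ioi_self)
  refine setLIntegral_congr_fun measurableSet_Ioc fun R hR => ?_
  have hR0 := hR.1
  rw [min_eq_left, mul_one]
  rw [one_le_div (by positivity)]
  exact pow_le_pow_left₀ hR0.le hR.2 4

lemma mkr_upper {k s : ℝ} (hk : 1 < k) (hk2 : k < 2) (hs : 0 ≤ s) :
    mkr k s ≤ ENNReal.ofReal ((1 / (2 * k) + 1 / (4 - 2 * k)) * s ^ (2 * k)) := by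
  rcases hs.eq_or_lt with rfl | hs
  · simp [mkr]
  have hu : Set.Ioi (0 : ℝ) = Set.Ioc 0 s ∪ Set.Ioi s := (Set.Ioc_union_Ioi_eq_Ioi hs.le).symm
  have hp : (0:ℝ) < s ^ (2 * k) := Real.rpow_pos_of_pos hs _
  have h4 : 0 < 4 - 2 * k := by linarith
  rw [mkr, hu]
  refine (lintegral_union_le _ _ _).trans ?_
  rw [add_mul, ENNReal.ofReal_add (by positivity) (by positivity)]
  refine add_le_add ?_ ?_
  · rw [show 1 / (2 * k) * s ^ (2 * k) = s ^ (2 * k) / (2 * k) by ring, ← mkr_aux hk hs]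
    refine setLIntegral_mono' measurableSet_Ioc fun R hR => ENNReal.ofReal_le_ofReal ?_
    exact mul_le_of_le_one_right (Real.rpow_nonneg hR.1.le _) (min_le_left _ _)
  · have hi : IntegrableOn (fun R : ℝ => s ^ 4 * R ^ (2 * k - 5)) (Set.Ioi s) :=
      (integrableOn_Ioi_rpow_of_lt (by linarith) hs).const_mul _
    have he : 1 / (4 - 2 * k) * s ^ (2 * k) = ∫ R in Set.Ioi s, s ^ 4 * R ^ (2 * k - 5) := by
      rw [integral_const_mul, integral_Ioi_rpow_of_lt (by linarith) hs,
        show 2 * k = (2 * k - 5 + 1) + (4:ℕ) by push_cast; ring, Real.rpow_add_natCast hs.ne']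
      have : 4 - (2 * k - 5 + 1 + (4:ℕ)) = -(2 * k - 5 + 1) := by push_cast; ring
      rw [this]
      have h5 : 2 * k - 5 + 1 ≠ 0 := by linarith
      have h6 : (2 * k - 5 + 1 + (4:ℕ) - 5 + 1) = 2 * k - 5 + 1 := by push_cast; ring
      rw [h6]
      field_simp
    rw [he, ofReal_integral_eq_lintegral_ofReal hi]
    · refine setLIntegral_mono' measurableSet_Ioi fun R hR => ENNReal.ofReal_le_ofReal ?_
      have hR0 : 0 < R := hs.trans hR
      calc _ ≤ R ^ (2 * k - 1) * (s ^ 4 / R ^ 4) :=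
            mul_le_mul_of_nonneg_left (min_le_right _ _) (Real.rpow_nonneg hR0.le _)
        _ = _ := by
          rw [show 2 * k - 1 = (2 * k - 5) + (4:ℕ) by push_cast; ring, Real.rpow_add_natCast hR0.ne']
          field_simp
    · refine (ae_restrict_iff' measurableSet_Ioi).2 (Filter.Eventually.of_forall fun R hR => ?_)
      have hR0 : 0 < R := hs.trans hR
      have := Real.rpow_nonneg hR0.le (2 * k - 5)
      dsimp; positivity

/-- weighted L2 -/
def QQ {n : ℕ} (k : ℝ) (f : SchwartzMap (Vn n) ℂ) : ℝ := ∫ x, ‖x‖ ^ (2 * k) * ‖f x‖ ^ 2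

/-- japanese weight -/
def jw {n : ℕ} (k : ℝ) (x : Vn n) : ℂ := (((1 + ‖x‖ ^ 2) ^ (k / 2) : ℝ) : ℂ)

lemma jw_temp {n : ℕ} (k : ℝ) : (jw k : Vn n → ℂ).HasTemperateGrowth :=
  Function.Complex.hasTemperateGrowth_ofReal.comp
    (Function.hasTemperateGrowth_one_add_norm_sq_rpow (Vn n) (k / 2))

lemma jw_sq {n : ℕ} (k : ℝ) (f : SchwartzMap (Vn n) ℂ) (x : Vn n) :
    ‖mS (jw k) f x‖ ^ 2 = (1 + ‖x‖ ^ 2) ^ k * ‖f x‖ ^ 2 := by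
  rw [mS_apply (jw_temp k), norm_mul, mul_pow, jw, Complex.norm_real,
    Real.norm_of_nonneg (by positivity), ← Real.rpow_natCast ((1 + ‖x‖ ^ 2) ^ (k / 2)),
    ← Real.rpow_mul (by positivity)]
  congr 2
  push_cast; ring

lemma pow_le_jw {n : ℕ} {k : ℝ} (hk : 0 < k) (x : Vn n) : ‖x‖ ^ (2 * k) ≤ (1 + ‖x‖ ^ 2) ^ k := by
  rw [Real.rpow_mul (norm_nonneg _)]
  refine Real.rpow_le_rpow (by positivity) ?_ hk.le
  rw [show (2:ℝ) = ((2:ℕ):ℝ) by norm_num, Real.rpow_natCast]; linarith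

lemma QQ_int {n : ℕ} {k : ℝ} (hk : 0 < k) (f : SchwartzMap (Vn n) ℂ) :
    Integrable (fun x => ‖x‖ ^ (2 * k) * ‖f x‖ ^ 2) := by
  refine (sq_integrable (mS (jw k) f)).mono' ?_ (Filter.Eventually.of_forall fun x => ?_)
  · have := f.continuous
    refine Continuous.aestronglyMeasurable (Continuous.mul ?_ (by fun_prop))
    exact continuous_norm.rpow_const fun x => Or.inr (by linarith)
  · rw [jw_sq, Real.norm_of_nonneg (by positivity)]
    exact mul_le_mul_of_nonneg_right (pow_le_jw hk x) (by positivity)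

lemma QQ_nonneg {n : ℕ} (k : ℝ) (f : SchwartzMap (Vn n) ℂ) : 0 ≤ QQ k f :=
  integral_nonneg fun x => by positivity

lemma QQ_le {n : ℕ} {k : ℝ} (hk : 0 < k) (f : SchwartzMap (Vn n) ℂ) :
    QQ k f ≤ nL (mS (jw k) f) ^ 2 := by
  rw [nL_sq]
  refine integral_mono (QQ_int hk f) (sq_integrable _) fun x => ?_
  dsimp only
  rw [jw_sq]
  exact mul_le_mul_of_nonneg_right (pow_le_jw hk x) (by positivity)

lemma jw_le {n : ℕ} {k : ℝ} (hk : 0 < k) (hk2 : k < 2) (f : SchwartzMap (Vn n) ℂ) :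
    nL (mS (jw k) f) ^ 2 ≤ 4 * (nL f ^ 2 + QQ k f) := by
  rw [nL_sq, nL_sq, QQ, ← integral_add (sq_integrable f) (QQ_int hk f), ← integral_const_mul]
  refine integral_mono (sq_integrable _) (((sq_integrable f).add (QQ_int hk f)).const_mul 4) fun x => ?_
  dsimp only
  rw [jw_sq]
  have h : (1 + ‖x‖ ^ 2) ^ k ≤ 4 * (1 + ‖x‖ ^ (2 * k)) := by
    have hy : 0 ≤ ‖x‖ ^ 2 := by positivity
    rw [Real.rpow_mul (norm_nonneg _), show (2:ℝ) = ((2:ℕ):ℝ) by norm_num, Real.rpow_natCast]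
    have h1 : (2:ℝ) ^ k ≤ 4 := by
      calc (2:ℝ) ^ k ≤ 2 ^ (2:ℝ) := Real.rpow_le_rpow_of_exponent_le (by norm_num) hk2.le
        _ = 4 := by norm_num
    have h2 : (1 + ‖x‖ ^ 2) ^ k ≤ (2 * max 1 (‖x‖ ^ 2)) ^ k := by
      refine Real.rpow_le_rpow (by positivity) ?_ hk.le
      have := le_max_left 1 (‖x‖ ^ 2); have := le_max_right 1 (‖x‖ ^ 2); linarith
    have h3 : (max 1 (‖x‖ ^ 2)) ^ k ≤ 1 + (‖x‖ ^ 2) ^ k := by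
      have := Real.rpow_nonneg hy k
      rcases max_cases 1 (‖x‖ ^ 2) with h | h <;> rw [h.1]
      · simpa using this
      · linarith
    refine h2.trans ?_
    rw [Real.mul_rpow (by norm_num) (by positivity)]
    exact mul_le_mul h1 h3 (by positivity) (by norm_num)
  calc _ ≤ 4 * (1 + ‖x‖ ^ (2 * k)) * ‖f x‖ ^ 2 := mul_le_mul_of_nonneg_right h (by positivity)
    _ = _ := by ring

lemma toNel {n : ℕ} (k c : ℝ) (f : SchwartzMap (Vn n) ℂ) :
    ∫⁻ R in Set.Ioi (0:ℝ), ENNReal.ofReal (R ^ (2 * k - 1) * WW c R f)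
      = ∫⁻ x, mkr k (c * ‖x‖) * ENNReal.ofReal (‖f x‖ ^ 2) := by
  have hf := f.continuous.measurable
  have h1 : ∀ R ∈ Set.Ioi (0:ℝ), ENNReal.ofReal (R ^ (2 * k - 1) * WW c R f)
      = ∫⁻ x, ENNReal.ofReal (R ^ (2 * k - 1) * min 1 ((c * ‖x‖) ^ 4 / R ^ 4)) * ENNReal.ofReal (‖f x‖ ^ 2) := by
    intro R hR
    have hR0 : (0:ℝ) ≤ R ^ (2 * k - 1) := Real.rpow_nonneg (le_of_lt hR) _
    have hm : ∀ x : Vn n, 0 ≤ min 1 ((c * ‖x‖) ^ 4 / R ^ 4) := fun x => le_min (by norm_num) (by positivity)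
    rw [WW, ← integral_const_mul, ofReal_integral_eq_lintegral_ofReal ((WW_int c R f).const_mul _)]
    · refine lintegral_congr fun x => ?_
      rw [← ENNReal.ofReal_mul (mul_nonneg hR0 (hm x)), mul_assoc]
    · exact Filter.Eventually.of_forall fun x => mul_nonneg hR0 (mul_nonneg (hm x) (by positivity))
  rw [setLIntegral_congr_fun measurableSet_Ioi h1, lintegral_lintegral_swap]
  · refine lintegral_congr fun x => ?_
    rw [mkr, lintegral_mul_const]
    exact Measurable.ennreal_ofReal (by fun_prop)
  · refine Measurable.aemeasurable ?_
    refine Measurable.mul (Measurable.ennreal_ofReal (by fun_prop)) (Measurable.ennreal_ofReal (by fun_prop))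

lemma WW_meas {n : ℕ} (c : ℝ) (f : SchwartzMap (Vn n) ℂ) : Measurable fun R : ℝ => WW c R f := by
  have hf := f.continuous.measurable
  have : StronglyMeasurable (fun p : ℝ × Vn n => min 1 ((c * ‖p.2‖) ^ 4 / p.1 ^ 4) * ‖f p.2‖ ^ 2) :=
    Measurable.stronglyMeasurable (by fun_prop)
  exact (this.integral_prod_right' (ν := volume)).measurable

lemma QQ_of {n : ℕ} {k : ℝ} (hk : 0 < k) {C : ℝ} (hC : 0 ≤ C) (f : SchwartzMap (Vn n) ℂ) :
    ∫⁻ x, ENNReal.ofReal (C * ‖x‖ ^ (2 * k)) * ENNReal.ofReal (‖f x‖ ^ 2) = ENNReal.ofReal (C * QQ k f) := by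
  rw [QQ, ← integral_const_mul, ofReal_integral_eq_lintegral_ofReal ((QQ_int hk f).const_mul _)]
  · refine lintegral_congr fun x => ?_
    rw [← ENNReal.ofReal_mul (by positivity), mul_assoc]
  · exact Filter.Eventually.of_forall fun x => by positivity

lemma QQ_main {n : ℕ} {k : ℝ} (hk : 1 < k) (hk2 : k < 2) : ∃ C : ℝ, 0 < C ∧
    ∀ (t : ℝ) (v : SchwartzMap (Vn n) ℂ), QQ k (US t v) ≤
      C * (QQ k v + |t| ^ (2 * k) * QQ k (𝓕 v) + |t| ^ k * nL v ^ 2) := by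
  have hk0 : 0 < k := by linarith
  set c : ℝ := 1 / (2 * k) + 1 / (4 - 2 * k) with hc
  have hc0 : 0 < c := by
    have : 0 < 4 - 2 * k := by linarith
    positivity
  set K : ℝ := 6 + 6 * (n * 25000) ^ 2 with hK
  have hK0 : 0 < K := by positivity
  refine ⟨2 * k * (K * c), by positivity, fun t v => ?_⟩
  set w := US t v
  have hτ : 0 ≤ |t| := abs_nonneg t
  have hQ1 := QQ_nonneg k v
  have hQ2 := QQ_nonneg k (𝓕 v)
  have a1 : ENNReal.ofReal (1 / (2 * k) * QQ k w) ≤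
      ∫⁻ R in Set.Ioi (0:ℝ), ENNReal.ofReal (R ^ (2 * k - 1) * WW 1 R w) := by
    rw [toNel, ← QQ_of hk0 (by positivity)]
    refine lintegral_mono fun x => mul_le_mul_left ?_ _
    rw [one_mul]
    refine le_trans (le_of_eq ?_) (mkr_lower hk (norm_nonneg x))
    congr 1; ring
  have a2 : ∀ (τ : ℝ) (hτ : 0 ≤ τ) (f : SchwartzMap (Vn n) ℂ),
      ∫⁻ R in Set.Ioi (0:ℝ), ENNReal.ofReal (R ^ (2 * k - 1) * WW τ R f) ≤
      ENNReal.ofReal (c * τ ^ (2 * k) * QQ k f) := by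
    intro τ hτ f
    rw [toNel, ← QQ_of hk0 (by positivity)]
    refine lintegral_mono fun x => mul_le_mul_left ?_ _
    refine (mkr_upper hk hk2 (by positivity)).trans (le_of_eq ?_)
    rw [Real.mul_rpow hτ (norm_nonneg _)]
    congr 1; ring
  have a3 : ∫⁻ R in Set.Ioi (0:ℝ), ENNReal.ofReal (R ^ (2 * k - 1) * (min 1 (√|t| ^ 4 / R ^ 4) * nL v ^ 2)) ≤
      ENNReal.ofReal (c * |t| ^ k * nL v ^ 2) := by
    have : ∀ R : ℝ, ENNReal.ofReal (R ^ (2 * k - 1) * (min 1 (√|t| ^ 4 / R ^ 4) * nL v ^ 2)) =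
        ENNReal.ofReal (R ^ (2 * k - 1) * min 1 (√|t| ^ 4 / R ^ 4)) * ENNReal.ofReal (nL v ^ 2) := by
      intro R
      rw [← ENNReal.ofReal_mul' (by positivity), mul_assoc]
    simp_rw [this]
    rw [lintegral_mul_const _ (Measurable.ennreal_ofReal (by fun_prop)), ENNReal.ofReal_mul (by positivity)]
    refine mul_le_mul_left ((mkr_upper hk hk2 (Real.sqrt_nonneg _)).trans (le_of_eq ?_)) _
    rw [Real.rpow_mul (Real.sqrt_nonneg _), show (2:ℝ) = ((2:ℕ):ℝ) by norm_num, Real.rpow_natCast,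
      Real.sq_sqrt hτ]
    norm_num [hc]
  have a4 : ∫⁻ R in Set.Ioi (0:ℝ), ENNReal.ofReal (R ^ (2 * k - 1) * WW 1 R w) ≤
      ENNReal.ofReal K * (ENNReal.ofReal (c * 1 ^ (2 * k) * QQ k v)
        + ENNReal.ofReal (c * |t| ^ (2 * k) * QQ k (𝓕 v)) + ENNReal.ofReal (c * |t| ^ k * nL v ^ 2)) := by
    refine le_trans ?_ (mul_le_mul_right (add_le_add (add_le_add (a2 1 zero_le_one v) (a2 |t| hτ (𝓕 v))) a3) _)
    have m1 : Measurable fun R : ℝ => ENNReal.ofReal (R ^ (2 * k - 1) * WW 1 R v) :=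
      Measurable.ennreal_ofReal ((by fun_prop : Measurable fun R : ℝ => R ^ (2 * k - 1)).mul (WW_meas 1 v))
    have m3 : Measurable fun R : ℝ => ENNReal.ofReal
        (R ^ (2 * k - 1) * (min 1 (√|t| ^ 4 / R ^ 4) * nL v ^ 2)) :=
      Measurable.ennreal_ofReal (by fun_prop)
    rw [← lintegral_add_left m1, ← lintegral_add_right _ m3]
    rw [← lintegral_const_mul' _ _ ENNReal.ofReal_ne_top]
    refine setLIntegral_mono' measurableSet_Ioi fun R hR => ?_
    have hR0 : (0:ℝ) ≤ R ^ (2 * k - 1) := Real.rpow_nonneg (le_of_lt hR) _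
    have h1 := WW_nonneg 1 R v
    have h2 := WW_nonneg |t| R (𝓕 v)
    have h3 : 0 ≤ min 1 (√|t| ^ 4 / R ^ 4) * nL v ^ 2 := mul_nonneg (le_min (by norm_num) (by positivity)) (by positivity)
    rw [← ENNReal.ofReal_add (by positivity) (by positivity), ← ENNReal.ofReal_add (by positivity) (by positivity),
      ← ENNReal.ofReal_mul (by positivity)]
    refine ENNReal.ofReal_le_ofReal ?_
    calc _ ≤ R ^ (2 * k - 1) * (K * _) := mul_le_mul_of_nonneg_left (perR' hR v) hR0
      _ = _ := by ring
  have a5 := a1.trans a4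
  rw [← ENNReal.ofReal_add (by positivity) (by positivity), ← ENNReal.ofReal_add (by positivity) (by positivity),
      ← ENNReal.ofReal_mul (by positivity), ENNReal.ofReal_le_ofReal_iff (by positivity), Real.one_rpow] at a5
  rw [one_div, inv_mul_le_iff₀ (by positivity)] at a5
  refine a5.trans (le_of_eq ?_)
  ring

lemma unc1 {n : ℕ} {e : Vn n} (he : ‖e‖ = 1) (g : SchwartzMap (Vn n) ℂ) :
    nL g ^ 2 ≤ 2 * (nL (mS (co e) g) * nL (∂_{e} g : SchwartzMap (Vn n) ℂ)) := by
  have h1 := inner_D e (mS (co e) g) g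
  rw [DX he, toLp_add', inner_add_left, inner_mS (co_temp e) (co_real e)] at h1
  have h2 : inner ℂ (g.toLp 2 volume) (g.toLp 2 volume) =
     - inner ℂ ((mS (co e) g).toLp 2 volume) ((∂_{e} g : SchwartzMap (Vn n) ℂ).toLp 2 volume)
     - inner ℂ ((∂_{e} g : SchwartzMap (Vn n) ℂ).toLp 2 volume) ((mS (co e) g).toLp 2 volume) := by
    rw [← h1]; ring
  have h3 := inner_self_eq_norm_sq_to_K (𝕜 := ℂ) (g.toLp 2 volume)
  have h4 : ‖inner ℂ (g.toLp 2 volume) (g.toLp 2 volume)‖ = nL g ^ 2 := by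
    rw [h3]; simp [nL]
  rw [← h4, h2]
  refine (norm_sub_le _ _).trans ?_
  rw [norm_neg]
  have a := norm_inner_le_norm (𝕜 := ℂ) ((mS (co e) g).toLp 2 volume) ((∂_{e} g : SchwartzMap (Vn n) ℂ).toLp 2 volume)
  have b := norm_inner_le_norm (𝕜 := ℂ) ((∂_{e} g : SchwartzMap (Vn n) ℂ).toLp 2 volume) ((mS (co e) g).toLp 2 volume)
  unfold nL
  linarith

lemma unc2 {n : ℕ} {e : Vn n} (he : ‖e‖ = 1) {τ : ℝ} (hτ : 0 ≤ τ) (v : SchwartzMap (Vn n) ℂ) :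
    τ * nL v ^ 2 ≤ 7 * (nL (mS (co e) v) ^ 2 + τ ^ 2 * nL (mS (co e) (𝓕 v)) ^ 2) := by
  have h1 := unc1 he (𝓕 v)
  rw [nL_fourier, SchwartzMap.lineDerivOp_fourier_eq, smul_co, nL_fourier, nL_smul, norm_2piI] at h1
  have hpi := Real.pi_lt_d2
  have hpi' := Real.pi_pos
  have ha := nL_nonneg (mS (co e) v)
  have hb := nL_nonneg (mS (co e) (𝓕 v))
  set a := nL (mS (co e) v)
  set b := nL (mS (co e) (𝓕 v))
  have h2 : τ * nL v ^ 2 ≤ 14 * (a * (τ * b)) := by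
    have h3 : nL v ^ 2 ≤ 14 * (a * b) := by
      have : 0 ≤ a * b := by positivity
      nlinarith
    nlinarith
  nlinarith [sq_nonneg (a - τ * b)]

lemma interp {k y ε : ℝ} (hk : 1 < k) (hε : 0 < ε) (hy : 0 ≤ y) : y ≤ ε + ε ^ (1 - k) * y ^ k := by
  rcases le_or_gt y ε with h | h
  · have : 0 ≤ ε ^ (1 - k) * y ^ k := by positivity
    linarith
  · have hy0 : 0 < y := hε.trans h
    have h1 : y ^ (1 - k) ≤ ε ^ (1 - k) := Real.rpow_le_rpow_of_nonpos hε h.le (by linarith)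
    have h2 : y = y ^ (1 - k) * y ^ k := by
      rw [← Real.rpow_add hy0]; simp
    have h3 : y ^ (1 - k) * y ^ k ≤ ε ^ (1 - k) * y ^ k := by gcongr
    linarith

lemma sq_rpow {k r : ℝ} (hr : 0 ≤ r) : (r ^ 2) ^ k = r ^ (2 * k) := by
  rw [Real.rpow_mul hr]; norm_num

lemma nL_co_le {n : ℕ} {e : Vn n} (he : ‖e‖ = 1) {k ε s : ℝ} (hk : 1 < k) (hε : 0 < ε) (hs : 0 < s)
    (f : SchwartzMap (Vn n) ℂ) :
    s * nL (mS (co e) f) ^ 2 ≤ ε * nL f ^ 2 + ε ^ (1 - k) * s ^ k * QQ k f := by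
  rw [nL_sq, nL_sq, QQ, ← integral_const_mul, ← integral_const_mul, ← integral_const_mul,
    ← integral_add ((sq_integrable f).const_mul _) ((QQ_int (by linarith) f).const_mul _)]
  refine integral_mono ((sq_integrable _).const_mul _) (((sq_integrable f).const_mul _).add
    ((QQ_int (by linarith) f).const_mul _)) fun x => ?_
  dsimp only
  rw [mS_apply (co_temp e), norm_mul, mul_pow]
  have h1 : ‖co e x‖ ^ 2 ≤ ‖x‖ ^ 2 := by
    have := norm_co_le he x
    gcongr
  have h2 := interp hk hε (y := s * ‖x‖ ^ 2) (by positivity)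
  rw [Real.mul_rpow hs.le (by positivity), sq_rpow (norm_nonneg _)] at h2
  calc s * (‖co e x‖ ^ 2 * ‖f x‖ ^ 2) ≤ (s * ‖x‖ ^ 2) * ‖f x‖ ^ 2 := by
        rw [mul_assoc]; gcongr
    _ ≤ (ε + ε ^ (1 - k) * (s ^ k * ‖x‖ ^ (2 * k))) * ‖f x‖ ^ 2 := by gcongr
    _ = _ := by ring

lemma unc {n : ℕ} (hn : 1 ≤ n) {k : ℝ} (hk : 1 < k) : ∃ C : ℝ, 0 < C ∧
    ∀ (t : ℝ) (v : SchwartzMap (Vn n) ℂ),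
      |t| ^ k * nL v ^ 2 ≤ C * (QQ k v + |t| ^ (2 * k) * QQ k (𝓕 v)) := by
  refine ⟨14 * (1 / 28 : ℝ) ^ (1 - k), by positivity, fun t v => ?_⟩
  set M := (1 / 28 : ℝ) ^ (1 - k)
  have hM : 0 < M := by positivity
  have hQ1 := QQ_nonneg k v
  have hQ2 := QQ_nonneg k (𝓕 v)
  have hτ : 0 ≤ |t| := abs_nonneg t
  set τ := |t|
  rcases hτ.eq_or_lt with h | h
  · rw [← h, Real.zero_rpow (by linarith)]
    have : (0:ℝ) ≤ 0 ^ (2 * k) := by positivity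
    rw [zero_mul]
    positivity
  let e : Vn n := EuclideanSpace.single ⟨0, hn⟩ 1
  have he : ‖e‖ = 1 := by simp [e]
  have h1 := unc2 he hτ v
  have h2 := nL_co_le he hk (ε := 1 / 28) (by norm_num) (inv_pos.2 h) v
  have h3 := nL_co_le he hk (ε := 1 / 28) (by norm_num) h (𝓕 v)
  rw [nL_fourier] at h3
  set a := nL (mS (co e) v) ^ 2
  set b := nL (mS (co e) (𝓕 v)) ^ 2
  set N := nL v ^ 2
  have hτk : 0 < τ ^ k := by positivity
  rw [Real.inv_rpow hτ] at h2
  have h4 : N ≤ 7 * (τ⁻¹ * a + τ * b) := by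
    have : τ * N ≤ τ * (7 * (τ⁻¹ * a + τ * b)) := by
      refine h1.trans (le_of_eq ?_)
      field_simp
    exact le_of_mul_le_mul_left this h
  have h5 : N ≤ 14 * M * ((τ ^ k)⁻¹ * QQ k v + τ ^ k * QQ k (𝓕 v)) := by
    change τ⁻¹ * a ≤ 1 / 28 * N + M * (τ ^ k)⁻¹ * QQ k v at h2
    change τ * b ≤ 1 / 28 * N + M * τ ^ k * QQ k (𝓕 v) at h3
    linarith
  have h6 : τ ^ (2 * k) = τ ^ k * τ ^ k := by
    rw [← Real.rpow_add h]; congr 1; ring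
  rw [h6]
  calc τ ^ k * N ≤ τ ^ k * (14 * M * ((τ ^ k)⁻¹ * QQ k v + τ ^ k * QQ k (𝓕 v))) := by gcongr
    _ = _ := by field_simp

lemma QQ_final {n : ℕ} (hn : 1 ≤ n) {k : ℝ} (hk : 1 < k) (hk2 : k < 2) : ∃ C : ℝ, 0 < C ∧
    ∀ (t : ℝ) (v : SchwartzMap (Vn n) ℂ), QQ k (US t v) ≤
      C * (QQ k v + |t| ^ (2 * k) * QQ k (𝓕 v)) := by
  obtain ⟨C1, h1, H1⟩ := QQ_main (n := n) hk hk2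
  obtain ⟨C2, h2, H2⟩ := unc hn hk
  refine ⟨C1 * (1 + C2), by positivity, fun t v => (H1 t v).trans ?_⟩
  have := H2 t v
  calc _ ≤ C1 * (QQ k v + |t| ^ (2 * k) * QQ k (𝓕 v) + C2 * (QQ k v + |t| ^ (2 * k) * QQ k (𝓕 v))) := by gcongr
    _ = _ := by ring

lemma fub {n : ℕ} {f g : Vn n → ℂ} (hf : Integrable f) (hg : Integrable g) :
    ∫ x, g x * (𝓕⁻ f) x = ∫ x, (𝓕⁻ g) x * f x := by
  have hfl : (-innerₗ (Vn n)).flip = -innerₗ (Vn n) := by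
    ext x y
    simp [real_inner_comm]
  have hc : Continuous fun p : Vn n × Vn n => (-innerₗ (Vn n)) p.1 p.2 := by
    simp only [LinearMap.neg_apply, innerₗ_apply_apply]
    fun_prop
  have h := VectorFourier.integral_fourierIntegral_smul_eq_flip (L := -innerₗ (Vn n))
    (μ := volume) (ν := volume) (f := g) (g := f) Real.continuous_fourierChar hc hg hf
  rw [hfl] at h
  simp only [smul_eq_mul] at h
  exact h.symm

lemma invCont {n : ℕ} {f : Vn n → ℂ} (hf : Integrable f) : Continuous (𝓕⁻ f) := by
  have hc : Continuous fun p : Vn n × Vn n => (-innerₗ (Vn n)) p.1 p.2 := by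
    simp only [LinearMap.neg_apply, innerₗ_apply_apply]
    fun_prop
  exact VectorFourier.fourierIntegral_continuous Real.continuous_fourierChar hc hf

lemma planch {n : ℕ} {f : Vn n → ℂ} (hf : Integrable f) (hf2 : MemLp f 2 volume) :
    eLpNorm (𝓕⁻ f) 2 volume = eLpNorm f 2 volume := by
  set F := hf2.toLp f with hF
  set G : Lp ℂ 2 (volume : Measure (Vn n)) := 𝓕⁻ F with hG
  have hae : ∀ᵐ x ∂(volume : Measure (Vn n)), G x = (𝓕⁻ f) x := by
    refine ae_eq_of_integral_contDiff_smul_eq ((Lp.memLp G).locallyIntegrable (by norm_num))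
      (invCont hf).locallyIntegrable fun g hg hgs => ?_
    have hgc : HasCompactSupport (fun x => (g x : ℂ)) := hgs.comp_left (g := fun r : ℝ => (r : ℂ)) (by simp)
    have hgd : ContDiff ℝ (⊤ : ℕ∞) (fun x => (g x : ℂ)) := Complex.ofRealCLM.contDiff.comp hg
    set φ : SchwartzMap (Vn n) ℂ := hgc.toSchwartzMap hgd with hφ
    have hφx : ∀ x, φ x = (g x : ℂ) := fun x => rfl
    have h1 := Lp.fourierInv_toTemperedDistribution_eq F
    have h2 := congrArg (fun T => T φ) h1
    simp only [TemperedDistribution.fourierInv_apply, Lp.toTemperedDistribution_apply, smul_eq_mul] at h2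
    have h3 := fub hf φ.integrable
    have h4 : ∫ x, (𝓕⁻ φ) x * F x = ∫ x, (𝓕⁻ (φ : Vn n → ℂ)) x * f x := by
      refine integral_congr_ae ?_
      filter_upwards [hf2.coeFn_toLp] with x hx
      rw [hF, hx, SchwartzMap.fourierInv_coe]
    rw [h4, ← h3] at h2
    simp only [hφx] at h2
    simp only [Complex.real_smul]
    exact h2.symm
  rw [← eLpNorm_congr_ae hae, ← Lp.enorm_def]
  have : ‖G‖ = ‖F‖ := by
    rw [← Lp.norm_fourier_eq G, hG, FourierTransform.fourier_fourierInv_eq]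
  rw [← ofReal_norm, this, ofReal_norm, Lp.enorm_def]
  exact eLpNorm_congr_ae hf2.coeFn_toLp

lemma eL2 {n : ℕ} {f : Vn n → ℂ} (hf : MemLp f 2 volume) :
    eLpNorm f 2 volume = ENNReal.ofReal √(∫ x, ‖f x‖ ^ 2) := by
  rw [hf.eLpNorm_eq_integral_rpow_norm (by norm_num) (by norm_num), Real.sqrt_eq_rpow]
  simp

lemma eLS {n : ℕ} (f : SchwartzMap (Vn n) ℂ) : eLpNorm f 2 volume = ENNReal.ofReal (nL f) := by
  rw [eL2 (f.memLp 2), ← nL_sq, Real.sqrt_sq (nL_nonneg f)]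

/-- japanese weight in frequency -/
def jw2 {n : ℕ} (k : ℝ) (x : Vn n) : ℂ := (((1 + (2 * Real.pi * ‖x‖) ^ 2) ^ (k / 2) : ℝ) : ℂ)

lemma jw2_temp {n : ℕ} (k : ℝ) : (jw2 k : Vn n → ℂ).HasTemperateGrowth := by
  have h1 : (fun x : Vn n => (2 * Real.pi) • x).HasTemperateGrowth :=
    ((2 * Real.pi) • ContinuousLinearMap.id ℝ (Vn n)).hasTemperateGrowth
  have h2 := (jw_temp (n := n) k).comp h1
  have h3 : (jw2 k : Vn n → ℂ) = (jw k : Vn n → ℂ) ∘ (fun x : Vn n => (2 * Real.pi) • x) := by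
    ext x
    simp [jw2, jw, norm_smul, abs_of_pos Real.pi_pos]
  rw [h3]; exact h2

lemma jap_eq {n : ℕ} (k : ℝ) (v : SchwartzMap (Vn n) ℂ) :
    eLpNorm (japMul n k v) 2 volume = ENNReal.ofReal (nL (mS (jw2 k) (𝓕 v))) := by
  have : japMul n k v = 𝓕⁻ (mS (jw2 k) (𝓕 v) : Vn n → ℂ) := by
    rw [japMul, ← SchwartzMap.fourier_coe]
    congr 1
    ext x
    rw [mS_apply (jw2_temp k)]; rfl
  rw [this, planch (SchwartzMap.integrable (mS (jw2 k) (𝓕 v))) (SchwartzMap.memLp (mS (jw2 k) (𝓕 v)) 2), eLS]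

lemma wx_eq {n : ℕ} (k : ℝ) (v : SchwartzMap (Vn n) ℂ) :
    eLpNorm (fun x : Vn n => (((1 + ‖x‖ ^ 2) ^ (k / 2) : ℝ) : ℂ) * v x) 2 volume
      = ENNReal.ofReal (nL (mS (jw k) v)) := by
  rw [← eLS]
  congr 1
  ext x
  rw [mS_apply (jw_temp k)]; rfl

lemma Sig_eq {n : ℕ} (k : ℝ) (v : SchwartzMap (Vn n) ℂ) :
    SigkNorm n k v = ENNReal.ofReal (max (nL (mS (jw2 k) (𝓕 v))) (nL (mS (jw k) v))) := by
  rw [SigkNorm, jap_eq, wx_eq, ENNReal.ofReal_max]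

lemma U_eq {n : ℕ} (t : ℝ) (v : SchwartzMap (Vn n) ℂ) : Ufree n t v = US t v := by
  rw [Ufree, US, SchwartzMap.fourierInv_coe, ← SchwartzMap.fourier_coe]
  congr 1
  ext x
  rw [mS_apply (gau_temp (re_zero _)), gau]
  congr 2
  push_cast
  ring

lemma jap_US {n : ℕ} (k t : ℝ) (v : SchwartzMap (Vn n) ℂ) :
    nL (mS (jw2 k) (𝓕 (US t v))) ≤ nL (mS (jw2 k) (𝓕 v)) := by
  rw [US, FourierTransform.fourier_fourierInv_eq]
  refine nL_mono fun x => ?_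
  rw [mS_apply (jw2_temp k), mS_apply (jw2_temp k), mS_apply (gau_temp (re_zero _)), norm_mul,
    norm_mul, norm_mul]
  have := norm_gau_le (re_zero (2 * Real.pi ^ 2 * t)) x
  have h2 : 0 ≤ ‖(jw2 k : Vn n → ℂ) x‖ := norm_nonneg _
  exact mul_le_mul_of_nonneg_left (mul_le_of_le_one_left (norm_nonneg _) this) h2

lemma om_le_jw2 {n : ℕ} {k : ℝ} (hk : 0 < k) (x : Vn n) :
    ‖(((2 * Real.pi * ‖x‖) ^ k : ℝ) : ℂ)‖ ≤ ‖(jw2 k : Vn n → ℂ) x‖ := by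
  have hp : 0 ≤ 2 * Real.pi * ‖x‖ := by positivity
  rw [jw2, Complex.norm_real, Complex.norm_real, Real.norm_of_nonneg (by positivity),
    Real.norm_of_nonneg (by positivity)]
  have : (2 * Real.pi * ‖x‖) ^ k = ((2 * Real.pi * ‖x‖) ^ 2) ^ (k / 2) := by
    rw [sq_rpow hp]; congr 1; ring
  rw [this]
  refine Real.rpow_le_rpow (by positivity) (by linarith) (by positivity)

lemma om_ge {n : ℕ} {k : ℝ} (hk : 0 < k) (v : SchwartzMap (Vn n) ℂ) :
    ENNReal.ofReal √(QQ k (𝓕 v)) ≤ eLpNorm (omMul n k v) 2 volume ∧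
    √(QQ k (𝓕 v)) ≤ nL (mS (jw2 k) (𝓕 v)) := by
  set f : Vn n → ℂ := fun ξ => (((2 * Real.pi * ‖ξ‖) ^ k : ℝ) : ℂ) * (𝓕 v) ξ with hf
  have h0 : omMul n k v = 𝓕⁻ f := by
    rw [omMul, ← SchwartzMap.fourier_coe]
  have hc : Continuous f := by
    have h1 : Continuous fun ξ : Vn n => (2 * Real.pi * ‖ξ‖) ^ k :=
      (by fun_prop : Continuous fun ξ : Vn n => 2 * Real.pi * ‖ξ‖).rpow_const fun x => Or.inr hk.le
    exact (Complex.continuous_ofReal.comp h1).mul (𝓕 v).continuous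
  have hle : ∀ x, ‖f x‖ ≤ ‖mS (jw2 k) (𝓕 v) x‖ := by
    intro x
    rw [mS_apply (jw2_temp k), hf, norm_mul, norm_mul]
    exact mul_le_mul_of_nonneg_right (om_le_jw2 hk x) (norm_nonneg _)
  have hi : Integrable f := (SchwartzMap.integrable (mS (jw2 k) (𝓕 v))).mono hc.aestronglyMeasurable
    (Filter.Eventually.of_forall hle)
  have hm : MemLp f 2 volume := (SchwartzMap.memLp (mS (jw2 k) (𝓕 v)) 2).mono hc.aestronglyMeasurable
    (Filter.Eventually.of_forall hle)
  have hfi : Integrable fun x => ‖f x‖ ^ 2 := (memLp_two_iff_integrable_sq_norm hm.1).1 hm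
  have hQ : QQ k (𝓕 v) ≤ ∫ x, ‖f x‖ ^ 2 := by
    refine integral_mono (QQ_int hk _) hfi fun x => ?_
    dsimp only
    rw [hf, norm_mul, mul_pow, Complex.norm_real, Real.norm_of_nonneg (by positivity)]
    refine mul_le_mul_of_nonneg_right ?_ (by positivity)
    rw [mul_comm, Real.rpow_mul (norm_nonneg _), Real.rpow_two]
    have : ‖x‖ ^ k ≤ (2 * Real.pi * ‖x‖) ^ k := by
      refine Real.rpow_le_rpow (norm_nonneg _) ?_ hk.le
      refine le_mul_of_one_le_left (norm_nonneg _) ?_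
      have := Real.pi_gt_three
      linarith
    gcongr
  constructor
  · rw [h0, planch hi hm, eL2 hm]
    exact ENNReal.ofReal_le_ofReal (Real.sqrt_le_sqrt hQ)
  · refine Real.sqrt_le_iff.2 ⟨nL_nonneg _, hQ.trans ?_⟩
    rw [nL_sq]
    refine integral_mono hfi (sq_integrable _) fun x => ?_
    have := hle x
    dsimp only
    gcongr

lemma one_le_jw {n : ℕ} {k : ℝ} (hk : 0 < k) (v : SchwartzMap (Vn n) ℂ) : nL v ≤ nL (mS (jw k) v) := by
  refine nL_mono fun x => ?_
  rw [mS_apply (jw_temp k), norm_mul, jw, Complex.norm_real, Real.norm_of_nonneg (by positivity)]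
  refine le_mul_of_one_le_left (norm_nonneg _) (Real.one_le_rpow ?_ (by positivity))
  have := sq_nonneg ‖x‖
  linarith

lemma real_main {n : ℕ} (hn : 1 ≤ n) {k : ℝ} (hk : 1 < k) (hk2 : k < 2) : ∃ D : ℝ, 1 ≤ D ∧
    ∀ (t : ℝ) (v : SchwartzMap (Vn n) ℂ), nL (mS (jw k) (US t v)) ≤
      D * (nL (mS (jw k) v) + |t| ^ k * √(QQ k (𝓕 v))) := by
  have hk0 : 0 < k := by linarith
  obtain ⟨C, hC, H⟩ := QQ_final hn hk hk2
  refine ⟨4 * (1 + C), by linarith, fun t v => ?_⟩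
  have h1 := jw_le hk0 hk2 (US t v)
  have h2 := H t v
  rw [nL_US] at h1
  have h3 := one_le_jw hk0 v
  have h4 := QQ_le hk0 v
  have h5 := nL_nonneg v
  have h6 := QQ_nonneg k (𝓕 v)
  have h7 : QQ k (𝓕 v) = √(QQ k (𝓕 v)) ^ 2 := (Real.sq_sqrt h6).symm
  have h8 : |t| ^ (2 * k) = (|t| ^ k) ^ 2 := by
    rw [mul_comm, Real.rpow_mul (abs_nonneg _), Real.rpow_two]
  have hq := Real.sqrt_nonneg (QQ k (𝓕 v))
  rw [h8, h7] at h2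
  set q := √(QQ k (𝓕 v))
  set B := nL (mS (jw k) v)
  set τ := |t| ^ k
  have hτ : 0 ≤ τ := by positivity
  have hB : 0 ≤ B := h5.trans h3
  have h9 : nL v ^ 2 ≤ B ^ 2 := by gcongr
  have hx : 0 ≤ τ * q := by positivity
  have h10 : C * (QQ k v + τ ^ 2 * q ^ 2) ≤ C * (B + τ * q) ^ 2 := by
    refine mul_le_mul_of_nonneg_left ?_ hC.le
    nlinarith [mul_nonneg hB hx]
  have h11 : nL (mS (jw k) (US t v)) ^ 2 ≤ 4 * (1 + C) * (B + τ * q) ^ 2 := by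
    have : B ^ 2 ≤ (B + τ * q) ^ 2 := by gcongr; linarith
    linarith
  refine (sq_le_sq₀ (nL_nonneg _) (by positivity)).1 (h11.trans ?_)
  rw [mul_pow]
  refine mul_le_mul_of_nonneg_right ?_ (by positivity)
  nlinarith

/-- Lemma A.2: for `n ≥ 1`, `1 < k < 2` there is `C` such that for all `t ∈ ℝ` and Schwartz
`v`: `‖U(t)v;Σ^k‖ ≤ C(‖v;Σ^k‖ + |t|^k ‖ω^k v‖₂) ≤ C(1+|t|)^k ‖v;Σ^k‖`. -/
theorem stmt_8 (n : ℕ) (hn : 1 ≤ n) (k : ℝ) (hk1 : 1 < k) (hk2 : k < 2) :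
    ∃ C : ℝ, 0 < C ∧ ∀ (t : ℝ) (v : SchwartzMap (Vn n) ℂ),
      SigkNorm n k (Ufree n t (fun y => v y))
          ≤ ENNReal.ofReal C * (SigkNorm n k (fun y => v y)
              + ENNReal.ofReal (|t| ^ k) * eLpNorm (omMul n k (fun y => v y)) 2 volume)
      ∧ SigkNorm n k (Ufree n t (fun y => v y))
          ≤ ENNReal.ofReal (C * (1 + |t|) ^ k) * SigkNorm n k (fun y => v y) := by
  have hk0 : 0 < k := by linarith
  obtain ⟨D, hD, H⟩ := real_main hn hk1 hk2
  refine ⟨2 * D, by linarith, fun t v => ?_⟩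
  change SigkNorm n k (Ufree n t v) ≤ ENNReal.ofReal (2 * D) * (SigkNorm n k v
              + ENNReal.ofReal (|t| ^ k) * eLpNorm (omMul n k v) 2 volume)
      ∧ SigkNorm n k (Ufree n t v) ≤ ENNReal.ofReal (2 * D * (1 + |t|) ^ k) * SigkNorm n k v
  obtain ⟨ho1, ho2⟩ := om_ge hk0 v
  have h1 := H t v
  have h2 := jap_US k t v
  rw [U_eq, Sig_eq, Sig_eq]
  have hq := Real.sqrt_nonneg (QQ k (𝓕 v))
  have hB := nL_nonneg (mS (jw k) v)
  have hA := nL_nonneg (mS (jw2 k) (𝓕 v))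
  set q := √(QQ k (𝓕 v))
  set B := nL (mS (jw k) v)
  set A := nL (mS (jw2 k) (𝓕 v))
  have hτ : 0 ≤ |t| ^ k := by positivity
  have hτ2 : |t| ^ k ≤ (1 + |t|) ^ k := Real.rpow_le_rpow (abs_nonneg _) (by linarith [abs_nonneg t]) hk0.le
  have hτ3 : 1 ≤ (1 + |t|) ^ k := Real.one_le_rpow (by linarith [abs_nonneg t]) hk0.le
  have hAm := le_max_left A B
  have hBm := le_max_right A B
  set S := max A B
  have hS : 0 ≤ S := hA.trans hAm
  have hx : 0 ≤ |t| ^ k * q := by positivity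
  have h3 : max (nL (mS (jw2 k) (𝓕 (US t v)))) (nL (mS (jw k) (US t v))) ≤ D * (S + |t| ^ k * q) := by
    refine max_le (h2.trans ?_) (h1.trans ?_)
    · nlinarith
    · gcongr
  constructor
  · calc _ ≤ ENNReal.ofReal (2 * D * (S + |t| ^ k * q)) := by
          refine ENNReal.ofReal_le_ofReal (h3.trans ?_)
          nlinarith
      _ = ENNReal.ofReal (2 * D) * (ENNReal.ofReal S + ENNReal.ofReal (|t| ^ k) * ENNReal.ofReal q) := by
          rw [ENNReal.ofReal_mul (by linarith), ENNReal.ofReal_add hS hx, ENNReal.ofReal_mul hτ]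
      _ ≤ _ := by gcongr
  · rw [← ENNReal.ofReal_mul (by positivity)]
    refine ENNReal.ofReal_le_ofReal (h3.trans ?_)
    have h4 : |t| ^ k * q ≤ (1 + |t|) ^ k * S := mul_le_mul hτ2 (ho2.trans hAm) hq (by positivity)
    have h5 : S ≤ (1 + |t|) ^ k * S := le_mul_of_one_le_left hS hτ3
    calc D * (S + |t| ^ k * q) ≤ D * ((1 + |t|) ^ k * S + (1 + |t|) ^ k * S) := by gcongr
      _ = _ := by ring
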